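/- arXiv:2404.07587 — 2 statements merged into one kernel-verified Lean document; each statement's English description precedes it below -/
import Mathlib

section
/- Let K > 0 and J ∈ ℝ, and assume φ_{K,J} attains its minimum over [−1,1] at exactly two points m₀ ≠ m₁ in (−1,1), each with φ_{K,J}''(m_i) > 0 (i.e., (K,J) lies on the coexistence curve γ). For i = 0,1, let A_i be an open neighborhood of m_i in (−1,1) whose closure does not contain m_{1−i}, and set W_n^{(i)} = (S_n − n·m_i)/√(n/φ_{K,J}''(m_i)). Then there exists a constant c = c(K,J) > 0 such that for i = 0,1 and all n ≥ 1, sup_{x∈ℝ} |P_{n,K,J}(W_n^{(i)} ≤ x | m_n ∈ A_i) − Φ(x)| ≤ c/√n, where the conditional probability is with respect to P_{n,K,J} and Φ is the standard normal distribution function. -/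
open MeasureTheory ProbabilityTheory Real Filter

noncomputable section

/-- The spin value `±1` associated with a Boolean. -/
def spin (b : Bool) : ℝ := if b then 1 else -1

/-- Total magnetization `S_n(x) = ∑ i, x_i`. -/
def totalMag (n : ℕ) (x : Fin n → Bool) : ℝ := ∑ i, spin (x i)

/-- Magnetization per particle `m_n(x) = S_n(x)/n`. -/
def magPP (n : ℕ) (x : Fin n → Bool) : ℝ := totalMag n x / n

/-- Boltzmann–Gibbs weight of a configuration in the cubic Curie–Weiss model
(the reference factor `2^{-n}` is constant and cancels upon normalization). -/
def cubicWeight (n : ℕ) (K J : ℝ) (x : Fin n → Bool) : ℝ :=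
  Real.exp (n * (K / 3 * (magPP n x) ^ 3 + J / 2 * (magPP n x) ^ 2))

/-- The cubic Curie–Weiss Boltzmann–Gibbs probability measure `P_{n,K,J}`. -/
def cubicMeasure (n : ℕ) (K J : ℝ) : Measure (Fin n → Bool) :=
  (∑ x : Fin n → Bool, ENNReal.ofReal (cubicWeight n K J x))⁻¹ •
    ∑ x : Fin n → Bool, ENNReal.ofReal (cubicWeight n K J x) • Measure.dirac x

/-- The probability of an event under `P_{n,K,J}`, as a real number. -/
def cubicProb (n : ℕ) (K J : ℝ) (s : Set (Fin n → Bool)) : ℝ :=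
  (cubicMeasure n K J s).toReal

/-- The binary relative entropy `I(m)`. -/
def binEnt (m : ℝ) : ℝ :=
  (1 - m) / 2 * Real.log ((1 - m) / 2) + (1 + m) / 2 * Real.log ((1 + m) / 2)

/-- The function `φ_{K,J}(x) = I(x) − (K/3)x³ − (J/2)x²`. -/
def phiKJ (K J : ℝ) (x : ℝ) : ℝ := binEnt x - K / 3 * x ^ 3 - J / 2 * x ^ 2

/-- The standard normal cumulative distribution function. -/
def stdNormalCDF (z : ℝ) : ℝ :=
  (ProbabilityTheory.gaussianReal 0 1 (Set.Iic z)).toReal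

end

/-!
By Stirling's formula, the Boltzmann weight of the configurations with magnetization per particle
`t` is, up to a relative error `O(|t - m| + 1 / n)` and a common factor, `exp (-n (φ t - φ m))`.
At a nondegenerate minimizer `m` of `φ`, Taylor's formula turns this into the Gaussian density in
`u = √(n φ''(m)) (t - m)`, with an error that is `O(1 / √n)` times a wider Gaussian density. In `u`
the admissible magnetizations form a grid of mesh `2 √φ''(m) / √n`, so that summing over a half-line
gives a Riemann sum of the Gaussian integral, again up to `O(1 / √n)`. Away from `m` but inside the
neighborhood, `φ` exceeds its minimum by a fixed amount, which makes the remaining weights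
exponentially small. The conditional distribution function is a quotient of two such sums, from
which the common factor drops out.
-/

open Set Topology in
lemma taylor_isBigO {E : Type*} [NormedAddCommGroup E] [NormedSpace ℝ E] {f : ℝ → E} {a : ℝ}
    {n : ℕ} (hf : ContDiffAt ℝ (n + 1 : ℕ) f a) :
    (fun t => f t - taylorWithinEval f n univ a t) =O[𝓝 a] fun t => (t - a) ^ (n + 1) := by
  obtain ⟨u, hu, hfu⟩ := hf.contDiffOn le_rfl (by simp)
  obtain ⟨r, hr, hball⟩ := Metric.mem_nhds_iff.1 hu
  have ha : a ∈ Metric.ball a r := Metric.mem_ball_self hr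
  have hlittle := taylor_isLittleO (convex_ball a r) ha (hfu.mono hball)
  rw [Metric.isOpen_ball.nhdsWithin_eq ha] at hlittle
  have hlast : (fun t => (((n + 1 : ℝ) * n.factorial)⁻¹ * (t - a) ^ (n + 1)) •
      iteratedDeriv (n + 1) f a) =O[𝓝 a] fun t => (t - a) ^ (n + 1) :=
    .of_bound _ <| .of_forall fun t => by rw [norm_smul, norm_mul, mul_right_comm]
  refine (hlittle.isBigO.add hlast).congr_left fun t => ?_
  have heval : taylorWithinEval f n (Metric.ball a r) a t = taylorWithinEval f n univ a t := by
    simp only [taylor_within_apply, iteratedDerivWithin_univ,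
      iteratedDerivWithin_of_isOpen Metric.isOpen_ball ha]
  rw [taylorWithinEval_succ, heval, iteratedDerivWithin_of_isOpen Metric.isOpen_ball ha]
  abel

lemma abs_exp_sub_one_le_abs_mul_exp_abs (x : ℝ) : |rexp x - 1| ≤ |x| * rexp |x| := by
  have h := Complex.norm_exp_sub_sum_le_norm_mul_exp x 1
  norm_num at h
  exact_mod_cast h

lemma cube_add_self_add_one_le_exp {b : ℝ} (hb : 0 < b) (u : ℝ) :
    u ^ 3 + u + 1 ≤ 4 / b ^ 2 * rexp b * rexp (b * u ^ 2) := by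
  have hquad : (b * (1 + u ^ 2)) ^ 2 / 2 ≤ rexp (b * (1 + u ^ 2)) := by
    simpa using Real.pow_div_factorial_le_exp (b * (1 + u ^ 2)) (by positivity) 2
  calc u ^ 3 + u + 1 ≤ 2 * (1 + u ^ 2) ^ 2 := by
        nlinarith [sq_nonneg (u ^ 2 - u), sq_nonneg (u - 1), sq_nonneg (u ^ 2)]
    _ = 4 / b ^ 2 * ((b * (1 + u ^ 2)) ^ 2 / 2) := by field_simp; ring
    _ ≤ 4 / b ^ 2 * rexp (b * (1 + u ^ 2)) := by gcongr
    _ = 4 / b ^ 2 * rexp b * rexp (b * u ^ 2) := by rw [mul_assoc, ← Real.exp_add]; ring_nf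

section RiemannSums

open Set

variable {E : Type*} [NormedAddCommGroup E] [NormedSpace ℝ E] {f f' : ℝ → E}

lemma norm_smul_sub_setIntegral_Ico_le [CompleteSpace E] (hderiv : ∀ t, HasDerivAt f (f' t) t)
    (hf' : Integrable f') (a : ℝ) {h : ℝ} (hh : 0 ≤ h) :
    ‖h • f a - ∫ t in Ico a (a + h), f t‖ ≤ h * ∫ t in Ico a (a + h), ‖f' t‖ := by
  have hvol : volume.real (Ico a (a + h)) = h := by
    rw [Real.volume_real_Ico_of_le (by linarith), add_sub_cancel_left]
  have hosc : ∀ t ∈ Ico a (a + h), ‖f a - f t‖ ≤ ∫ s in Ico a (a + h), ‖f' s‖ := by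
    intro t ht
    rw [norm_sub_rev, ← intervalIntegral.integral_eq_sub_of_hasDerivAt (fun x _ => hderiv x)
      hf'.intervalIntegrable]
    refine (intervalIntegral.norm_integral_le_integral_norm ht.1).trans ?_
    rw [intervalIntegral.integral_of_le ht.1, ← integral_Ico_eq_integral_Ioc]
    exact setIntegral_mono_set hf'.norm.integrableOn (.of_forall fun x => norm_nonneg _)
      (Ico_subset_Ico_right ht.2.le).eventuallyLE
  have hcont : Continuous f := continuous_iff_continuousAt.2 fun t => (hderiv t).continuousAt
  have hconst : h • f a = ∫ _ in Ico a (a + h), f a := by rw [setIntegral_const, hvol]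
  have hfint : IntegrableOn f (Ico a (a + h)) :=
    hcont.integrableOn_Icc.mono_set Ico_subset_Icc_self
  have hcint : IntegrableOn (fun _ => f a) (Ico a (a + h)) :=
    continuous_const.integrableOn_Icc.mono_set Ico_subset_Icc_self
  rw [hconst, ← integral_sub hcint hfint]
  have hbound := norm_setIntegral_le_of_norm_le_const (μ := volume) measure_Ico_lt_top hosc
  rwa [hvol, mul_comm] at hbound

/-- The `k`-th cell of the grid of mesh `h` that starts at `a`. -/
def gridCell (a h : ℝ) (k : ℕ) : Set ℝ := Ico (a + k * h) (a + k * h + h)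

lemma pairwise_disjoint_gridCell (a h : ℝ) :
    Pairwise (Function.onFun Disjoint (gridCell a h)) := by
  intro i j hij
  have := pairwise_disjoint_Ico_add_zsmul a h (Nat.cast_injective.ne hij)
  simpa only [Function.onFun, gridCell, zsmul_eq_mul, Int.cast_add, Int.cast_natCast,
    Int.cast_one, add_mul, one_mul, ← add_assoc] using this

lemma mem_gridCell_floor {a h t : ℝ} (hh : 0 < h) (hat : a ≤ t) :
    t ∈ gridCell a h ⌊(t - a) / h⌋₊ := by
  have hle := (le_div_iff₀ hh).1 (Nat.floor_le (div_nonneg (sub_nonneg.2 hat) hh.le))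
  have hlt := (div_lt_iff₀ hh).1 (Nat.lt_floor_add_one ((t - a) / h))
  constructor <;> linarith

lemma measurableSet_biUnion_gridCell (a h : ℝ) (T : Finset ℕ) :
    MeasurableSet (⋃ k ∈ T, gridCell a h k) :=
  T.measurableSet_biUnion fun _ _ => measurableSet_Ico

lemma setIntegral_biUnion_gridCell (hf : Integrable f) (a h : ℝ) (T : Finset ℕ) :
    ∫ t in ⋃ k ∈ T, gridCell a h k, f t = ∑ k ∈ T, ∫ t in gridCell a h k, f t :=
  integral_biUnion_finset T (fun _ _ => measurableSet_Ico)
    ((pairwise_disjoint_gridCell a h).set_pairwise _) fun _ _ => hf.integrableOn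

lemma norm_smul_sum_sub_setIntegral_biUnion_gridCell_le [CompleteSpace E]
    (hderiv : ∀ t, HasDerivAt f (f' t) t) (hf : Integrable f) (hf' : Integrable f')
    (a : ℝ) {h : ℝ} (hh : 0 ≤ h) (T : Finset ℕ) :
    ‖h • ∑ k ∈ T, f (a + k * h) - ∫ t in ⋃ k ∈ T, gridCell a h k, f t‖ ≤ h * ∫ t, ‖f' t‖ := by
  calc ‖h • ∑ k ∈ T, f (a + k * h) - ∫ t in ⋃ k ∈ T, gridCell a h k, f t‖
      ≤ ∑ k ∈ T, ‖h • f (a + k * h) - ∫ t in gridCell a h k, f t‖ := by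
        rw [setIntegral_biUnion_gridCell hf, Finset.smul_sum, ← Finset.sum_sub_distrib]
        exact norm_sum_le _ _
    _ ≤ ∑ k ∈ T, h * ∫ t in gridCell a h k, ‖f' t‖ :=
        Finset.sum_le_sum fun _ _ => norm_smul_sub_setIntegral_Ico_le hderiv hf' _ hh
    _ = h * ∫ t in ⋃ k ∈ T, gridCell a h k, ‖f' t‖ := by
        rw [setIntegral_biUnion_gridCell hf'.norm, Finset.mul_sum]
    _ ≤ h * ∫ t, ‖f' t‖ :=
        mul_le_mul_of_nonneg_left
          (setIntegral_le_integral hf'.norm (.of_forall fun t => norm_nonneg _)) hh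

lemma norm_setIntegral_sub_setIntegral_le {X : Type*} [MeasurableSpace X] {μ : Measure X}
    {f : X → E} {s t : Set X} (hs : MeasurableSet s) (ht : MeasurableSet t) (hf : Integrable f μ) :
    ‖∫ x in s, f x ∂μ - ∫ x in t, f x ∂μ‖
      ≤ ∫ x in s \ t, ‖f x‖ ∂μ + ∫ x in t \ s, ‖f x‖ ∂μ := by
  rw [← integral_inter_add_sdiff (s := s) ht hf.integrableOn,
    ← integral_inter_add_sdiff (s := t) hs hf.integrableOn, inter_comm t s, add_sub_add_left_eq_sub]
  exact (norm_sub_le _ _).trans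
    (add_le_add (norm_integral_le_integral_norm _) (norm_integral_le_integral_norm _))

/-- Only the last cell can stick out of a lower set that contains all the left endpoints. -/
lemma exists_biUnion_gridCell_diff_subset {a h : ℝ} (hh : 0 ≤ h) {B : Set ℝ} (hB : IsLowerSet B)
    {T : Finset ℕ} (hT : ∀ k ∈ T, a + k * h ∈ B) :
    ∃ k, (⋃ i ∈ T, gridCell a h i) \ B ⊆ gridCell a h k := by
  rcases T.eq_empty_or_nonempty with rfl | hne
  · exact ⟨0, by simp⟩
  refine ⟨T.max' hne, ?_⟩
  rintro t ⟨ht, htB⟩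
  obtain ⟨i, hi, hti⟩ := mem_iUnion₂.1 ht
  obtain heq | hlt := (T.le_max' i hi).eq_or_lt
  · exact heq ▸ hti
  refine absurd (hB ?_ (hT _ (T.max'_mem hne))) htB
  have hsucc : (i + 1 : ℝ) ≤ T.max' hne := by exact_mod_cast hlt
  have hstep := mul_le_mul_of_nonneg_right hsucc hh
  linarith [hti.2]

lemma diff_biUnion_gridCell_subset {a h R : ℝ} (hh : 0 < h) {n : ℕ} (ha : a ≤ -R)
    (hn : R ≤ a + n * h) {B : Set ℝ} (hB : IsLowerSet B) {T : Finset ℕ}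
    (hT : ∀ k ≤ n, a + k * h ∈ B → |a + k * h| < R → k ∈ T) :
    B \ ⋃ k ∈ T, gridCell a h k ⊆ {t | R - h ≤ |t|} := by
  rintro t ⟨htB, htU⟩
  by_contra hsmall
  rw [mem_ofPred_eq, not_le, abs_lt] at hsmall
  obtain ⟨hlo, hup⟩ := hsmall
  refine htU ?_
  have hcell := mem_gridCell_floor (a := a) hh (by linarith : a ≤ t)
  set k := ⌊(t - a) / h⌋₊
  have hkn : (k : ℝ) < n := lt_of_mul_lt_mul_right (by linarith [hcell.1]) hh.le
  refine mem_iUnion₂.2 ⟨k, hT k (by exact_mod_cast hkn.le) (hB hcell.1 htB) ?_, hcell⟩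
  rw [abs_lt]
  constructor <;> linarith [hcell.1, hcell.2]

end RiemannSums

section Gaussian

open Set

variable {b : ℝ}

lemma integral_abs_mul_exp_neg_mul_sq (hb : 0 < b) : ∫ t : ℝ, |t| * rexp (-b * t ^ 2) = 1 / b := by
  have hhalf := integral_rpow_mul_exp_neg_mul_rpow (p := 2) (q := 1) two_pos (by norm_num) hb
  have habs := integral_comp_abs (f := fun t => t * rexp (-b * t ^ 2))
  norm_num at hhalf
  simp only [sq_abs, neg_mul] at habs ⊢
  rw [habs, hhalf, Real.rpow_neg_one]
  field_simp

lemma integrable_abs_mul_exp_neg_mul_sq (hb : 0 < b) :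
    Integrable fun t : ℝ => |t| * rexp (-b * t ^ 2) := by
  simpa only [norm_mul, Real.norm_eq_abs, Real.abs_exp]
    using (integrable_mul_exp_neg_mul_sq hb).norm

lemma abs_mul_sum_sub_setIntegral_exp_neg_mul_sq_le (hb : 0 < b) (a : ℝ) {h : ℝ} (hh : 0 ≤ h)
    (T : Finset ℕ) :
    |h * ∑ k ∈ T, rexp (-b * (a + k * h) ^ 2)
        - ∫ t in ⋃ k ∈ T, gridCell a h k, rexp (-b * t ^ 2)| ≤ 2 * h := by
  have hderiv (t : ℝ) :
      HasDerivAt (fun t => rexp (-b * t ^ 2)) (-2 * b * (t * rexp (-b * t ^ 2))) t :=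
    (((hasDerivAt_pow 2 t).const_mul (-b)).exp).congr_deriv (by norm_num; ring)
  have hvar : ∫ t, ‖-2 * b * (t * rexp (-b * t ^ 2))‖ = 2 := by
    simp only [norm_mul, Real.norm_eq_abs, Real.abs_exp, integral_const_mul,
      integral_abs_mul_exp_neg_mul_sq hb, abs_neg, abs_two, abs_of_pos hb]
    field_simp
  have hriemann := norm_smul_sum_sub_setIntegral_biUnion_gridCell_le hderiv
    (integrable_exp_neg_mul_sq hb) ((integrable_mul_exp_neg_mul_sq hb).const_mul _) a hh T
  rwa [hvar, mul_comm h 2] at hriemann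

lemma mul_sum_exp_neg_mul_sq_le (hb : 0 < b) (a : ℝ) {h : ℝ} (hh : 0 ≤ h) (T : Finset ℕ) :
    h * ∑ k ∈ T, rexp (-b * (a + k * h) ^ 2) ≤ √(π / b) + 2 * h := by
  have hsum := (abs_le.1 (abs_mul_sum_sub_setIntegral_exp_neg_mul_sq_le hb a hh T)).2
  have hint := setIntegral_le_integral (s := ⋃ k ∈ T, gridCell a h k)
    (integrable_exp_neg_mul_sq hb) (.of_forall fun t => (Real.exp_pos _).le)
  rw [integral_gaussian] at hint
  linarith

lemma setIntegral_exp_neg_mul_sq_le_volume (hb : 0 ≤ b) {s : Set ℝ} (hs : volume s ≠ ⊤) :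
    ∫ t in s, rexp (-b * t ^ 2) ≤ volume.real s := by
  have hle (t : ℝ) : rexp (-b * t ^ 2) ≤ 1 := Real.exp_le_one_iff.2 (by nlinarith [sq_nonneg t])
  have h := norm_setIntegral_le_of_norm_le_const (μ := volume) (f := fun t => rexp (-b * t ^ 2))
    hs.lt_top fun t _ => (Real.abs_exp _).trans_le (hle t)
  rw [one_mul] at h
  exact (Real.le_norm_self _).trans h

/-- Markov's inequality: `1 ≤ |t| / R` on the domain of integration. -/
lemma setIntegral_le_abs_exp_neg_mul_sq_le (hb : 0 < b) {R : ℝ} (hR : 0 < R) :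
    ∫ t in {t : ℝ | R ≤ |t|}, rexp (-b * t ^ 2) ≤ 1 / (b * R) := by
  have hint := (integrable_abs_mul_exp_neg_mul_sq hb).const_mul R⁻¹
  calc ∫ t in {t : ℝ | R ≤ |t|}, rexp (-b * t ^ 2)
      ≤ ∫ t in {t : ℝ | R ≤ |t|}, R⁻¹ * (|t| * rexp (-b * t ^ 2)) := by
        refine setIntegral_mono_on (integrable_exp_neg_mul_sq hb).integrableOn hint.integrableOn
          (measurableSet_le measurable_const measurable_norm) fun t ht => ?_
        rw [← mul_assoc]
        exact le_mul_of_one_le_left (Real.exp_pos _).le ((one_le_inv_mul₀ hR).2 ht)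
    _ ≤ ∫ t, R⁻¹ * (|t| * rexp (-b * t ^ 2)) :=
        setIntegral_le_integral hint (.of_forall fun t => by positivity)
    _ = 1 / (b * R) := by
        rw [integral_const_mul, integral_abs_mul_exp_neg_mul_sq hb]
        field_simp

lemma abs_mul_sum_sub_setIntegral_lowerSet_exp_neg_mul_sq_le (hb : 0 < b) {a h R : ℝ}
    (hh : 0 < h) (hR : h < R) {n : ℕ} (ha : a ≤ -R) (hn : R ≤ a + n * h) {B : Set ℝ}
    (hB : IsLowerSet B) {T : Finset ℕ}
    (hT : ∀ k, k ∈ T ↔ k ≤ n ∧ a + k * h ∈ B ∧ |a + k * h| < R) :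
    |h * ∑ k ∈ T, rexp (-b * (a + k * h) ^ 2) - ∫ t in B, rexp (-b * t ^ 2)|
      ≤ 3 * h + 1 / (b * (R - h)) := by
  set U := ⋃ k ∈ T, gridCell a h k with hU
  have hint := integrable_exp_neg_mul_sq hb
  have hmono {s t : Set ℝ} (hst : s ⊆ t) :
      ∫ x in s, rexp (-b * x ^ 2) ≤ ∫ x in t, rexp (-b * x ^ 2) :=
    setIntegral_mono_set hint.integrableOn (.of_forall fun x => (Real.exp_pos _).le)
      hst.eventuallyLE
  have hsum := abs_mul_sum_sub_setIntegral_exp_neg_mul_sq_le hb a hh.le T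
  have hdiff := norm_setIntegral_sub_setIntegral_le (measurableSet_biUnion_gridCell a h T)
    hB.ordConnected.measurableSet hint
  simp only [Real.norm_eq_abs, Real.abs_exp, ← hU] at hdiff
  have hover : ∫ t in U \ B, rexp (-b * t ^ 2) ≤ h := by
    obtain ⟨k, hk⟩ := exists_biUnion_gridCell_diff_subset hh.le hB fun k hk => ((hT k).1 hk).2.1
    calc ∫ t in U \ B, rexp (-b * t ^ 2) ≤ ∫ t in gridCell a h k, rexp (-b * t ^ 2) := hmono hk
      _ ≤ volume.real (gridCell a h k) :=
          setIntegral_exp_neg_mul_sq_le_volume hb.le (by simp [gridCell])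
      _ = h := by rw [gridCell, Real.volume_real_Ico_of_le (by linarith), add_sub_cancel_left]
  have hmiss : ∫ t in B \ U, rexp (-b * t ^ 2) ≤ 1 / (b * (R - h)) :=
    (hmono (diff_biUnion_gridCell_subset hh ha hn hB fun k hk hkB hkR =>
      (hT k).2 ⟨hk, hkB, hkR⟩)).trans (setIntegral_le_abs_exp_neg_mul_sq_le hb (sub_pos.2 hR))
  linarith [abs_sub_le (h * ∑ k ∈ T, rexp (-b * (a + k * h) ^ 2)) (∫ t in U, rexp (-b * t ^ 2))
    (∫ t in B, rexp (-b * t ^ 2))]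

end Gaussian

section Binomial

variable {n k : ℕ}

/-- `log (stirlingSeq j) - 1 / (12 j)` increases to `log √π`. -/
lemma log_stirlingSeq_le (hn : n ≠ 0) :
    log (Stirling.stirlingSeq n) ≤ log √π + 1 / (12 * n) := by
  obtain ⟨j, rfl⟩ := Nat.exists_eq_succ_of_ne_zero hn
  have hmono : Monotone fun j : ℕ =>
      log (Stirling.stirlingSeq (j + 1)) - 1 / 12 * (1 / ((j : ℝ) + 1)) := by
    refine monotone_nat_of_le_succ fun j => ?_
    have hstep := Stirling.log_stirlingSeq_sdiff_le (j + 1)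
    have htele : 1 / (12 * ((j + 1 : ℕ) : ℝ) * (((j + 1 : ℕ) : ℝ) + 1))
        = 1 / 12 * (1 / ((j : ℝ) + 1)) - 1 / 12 * (1 / (((j + 1 : ℕ) : ℝ) + 1)) := by
      push_cast
      field_simp
      ring
    linarith
  have hlim := ((Stirling.tendsto_stirlingSeq_sqrt_pi.log (by positivity)).comp
    (tendsto_add_atTop_nat 1)).sub
      ((tendsto_one_div_add_atTop_nhds_zero_nat (𝕜 := ℝ)).const_mul (1 / 12))
  rw [mul_zero, sub_zero] at hlim
  have hle := hmono.ge_of_tendsto hlim j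
  rw [one_div_mul_one_div] at hle
  push_cast
  linarith

/-- The relative error made in replacing the three factorials of `n.choose k` by their Stirling
approximations. -/
noncomputable def stirlingRatio (n k : ℕ) : ℝ :=
  √π * Stirling.stirlingSeq n / (Stirling.stirlingSeq k * Stirling.stirlingSeq (n - k))

/-- The magnetization per particle of a configuration of `n` spins, `k` of which are up. -/
noncomputable def gridMag (n k : ℕ) : ℝ := (2 * k - n) / n

lemma half_one_add_gridMag (hn : n ≠ 0) : (1 + gridMag n k) / 2 = k / n := by
  rw [gridMag]
  field_simp
  ring

lemma half_one_sub_gridMag (hkn : k ≤ n) (hn : n ≠ 0) :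
    (1 - gridMag n k) / 2 = (n - k : ℕ) / n := by
  rw [gridMag, Nat.cast_sub hkn]
  field_simp
  ring

lemma gridMag_mem_Icc (hkn : k ≤ n) (hn : n ≠ 0) : gridMag n k ∈ Set.Icc (-1) 1 := by
  have hadd : 0 ≤ (1 + gridMag n k) / 2 := by
    rw [half_one_add_gridMag hn]
    positivity
  have hsub : 0 ≤ (1 - gridMag n k) / 2 := by
    rw [half_one_sub_gridMag hkn hn]
    positivity
  constructor <;> linarith

lemma one_sub_gridMag_sq (hkn : k ≤ n) (hn : n ≠ 0) :
    1 - gridMag n k ^ 2 = 4 * (k / n) * ((n - k : ℕ) / n) := by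
  rw [← half_one_add_gridMag hn, ← half_one_sub_gridMag hkn hn]
  ring

lemma exp_mul_binEnt_gridMag (hkn : k ≤ n) (hn : n ≠ 0) :
    rexp (n * binEnt (gridMag n k)) = (k / n : ℝ) ^ k * ((n - k : ℕ) / n : ℝ) ^ (n - k) := by
  have hexp (j : ℕ) : rexp (j * log (j / n)) = (j / n : ℝ) ^ j := by
    rcases eq_or_ne j 0 with rfl | hj
    · simp
    · rw [mul_comm, ← Real.rpow_def_of_pos (by positivity), Real.rpow_natCast]
  rw [← hexp, ← hexp, ← Real.exp_add, binEnt, half_one_add_gridMag hn, half_one_sub_gridMag hkn hn]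
  congr 1
  field_simp
  ring

lemma choose_mul_exp_mul_binEnt_le_one (hkn : k ≤ n) (hn : n ≠ 0) :
    n.choose k * rexp (n * binEnt (gridMag n k)) ≤ 1 := by
  have hone : (k / n + (n - k : ℕ) / n : ℝ) = 1 := by
    rw [Nat.cast_sub hkn]
    field_simp
    ring
  have hbinom := add_pow (k / n : ℝ) ((n - k : ℕ) / n) n
  rw [hone, one_pow] at hbinom
  rw [exp_mul_binEnt_gridMag hkn hn, hbinom, mul_comm]
  exact Finset.single_le_sum
    (f := fun i => (k / n : ℝ) ^ i * ((n - k : ℕ) / n : ℝ) ^ (n - i) * n.choose i)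
    (fun i _ => by positivity) (Finset.mem_range_succ_iff.2 hkn)

lemma stirlingSeq_pos (hn : n ≠ 0) : 0 < Stirling.stirlingSeq n :=
  (by positivity : 0 < √π).trans_le (Stirling.sqrt_pi_le_stirlingSeq hn)

lemma stirlingRatio_pos (hk : k ≠ 0) (hkn : k < n) : 0 < stirlingRatio n k :=
  div_pos (mul_pos (by positivity) (stirlingSeq_pos (by lia)))
    (mul_pos (stirlingSeq_pos hk) (stirlingSeq_pos (by lia)))

lemma abs_log_stirlingRatio_le (hk : k ≠ 0) (hkn : k < n) :
    |log (stirlingRatio n k)| ≤ 1 / (n * (1 - gridMag n k ^ 2)) := by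
  have hl : n - k ≠ 0 := by lia
  have hn : n ≠ 0 := by lia
  have hlow {j : ℕ} (hj : j ≠ 0) : log √π ≤ log (Stirling.stirlingSeq j) :=
    Real.log_le_log (by positivity) (Stirling.sqrt_pi_le_stirlingSeq hj)
  have hlog : log (stirlingRatio n k) = log √π + log (Stirling.stirlingSeq n)
      - (log (Stirling.stirlingSeq k) + log (Stirling.stirlingSeq (n - k))) := by
    have hn' := stirlingSeq_pos hn
    have hk' := stirlingSeq_pos hk
    have hl' := stirlingSeq_pos hl
    rw [stirlingRatio, Real.log_div (by positivity) (by positivity),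
      Real.log_mul (by positivity) hn'.ne', Real.log_mul hk'.ne' hl'.ne']
  have hsum : 1 / (n * (1 - gridMag n k ^ 2)) = 3 * (1 / (12 * k) + 1 / (12 * (n - k : ℕ))) := by
    have hcast : (n : ℝ) = k + (n - k : ℕ) := by rw [Nat.cast_sub hkn.le]; ring
    rw [one_sub_gridMag_sq hkn.le hn]
    field_simp
    linarith
  have hkn' : 1 / (12 * (n : ℝ)) ≤ 1 / (12 * k) := by gcongr
  have hl0 : 0 ≤ 1 / (12 * ((n - k : ℕ) : ℝ)) := by positivity
  rw [hlog, hsum, abs_le]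
  constructor <;> linarith [hlow hn, hlow hk, hlow hl, log_stirlingSeq_le hn,
    log_stirlingSeq_le hk, log_stirlingSeq_le hl]

lemma choose_eq_stirlingRatio_mul (hk : k ≠ 0) (hkn : k < n) :
    (n.choose k : ℝ) = stirlingRatio n k * √(2 / (π * n * (1 - gridMag n k ^ 2)))
      / rexp (n * binEnt (gridMag n k)) := by
  have hfact {j : ℕ} (hj : j ≠ 0) :
      (j.factorial : ℝ) = Stirling.stirlingSeq j * (√(2 * j) * (j / rexp 1) ^ j) := by
    rw [Stirling.stirlingSeq, div_mul_cancel₀ _ (by positivity)]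
  have hn : n ≠ 0 := by lia
  have hl : n - k ≠ 0 := by lia
  have hsqrt : √(2 * n) / (√(2 * k) * √(2 * (n - k : ℕ)))
      = √π * √(2 / (π * n * (1 - gridMag n k ^ 2))) := by
    rw [← Real.sqrt_mul (by positivity), ← Real.sqrt_mul (by positivity),
      ← Real.sqrt_div (by positivity), one_sub_gridMag_sq hkn.le hn]
    congr 1
    field_simp
    norm_num
  have hpow : (n / rexp 1) ^ n / ((k / rexp 1) ^ k * ((n - k : ℕ) / rexp 1) ^ (n - k))
      = 1 / rexp (n * binEnt (gridMag n k)) := by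
    rw [exp_mul_binEnt_gridMag hkn.le hn]
    simp only [div_pow]
    field_simp
    rw [mul_assoc, mul_assoc, ← pow_add, ← pow_add, Nat.add_sub_cancel' hkn.le, mul_comm]
  rw [Nat.cast_choose ℝ hkn.le, hfact hn, hfact hk, hfact hl]
  calc _ = Stirling.stirlingSeq n / (Stirling.stirlingSeq k * Stirling.stirlingSeq (n - k))
        * (√(2 * n) / (√(2 * k) * √(2 * (n - k : ℕ))))
        * ((n / rexp 1) ^ n / ((k / rexp 1) ^ k * ((n - k : ℕ) / rexp 1) ^ (n - k))) := by
        simp only [div_eq_mul_inv, mul_inv]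
        ring
    _ = stirlingRatio n k * √(2 / (π * n * (1 - gridMag n k ^ 2)))
          / rexp (n * binEnt (gridMag n k)) := by
        rw [hsqrt, hpow, stirlingRatio]
        ring

end Binomial

section MeanField

variable {n k : ℕ} {g : ℝ → ℝ} {A B : Set ℝ}

/-- The Gibbs measure of the mean-field model of `n` spins whose energy per particle is `-g`,
as a function of the magnetization per particle. -/
noncomputable def meanFieldMeasure (n : ℕ) (g : ℝ → ℝ) : Measure (Fin n → Bool) :=
  (∑ x : Fin n → Bool, ENNReal.ofReal (rexp (n * g (magPP n x))))⁻¹ •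
    ∑ x : Fin n → Bool, ENNReal.ofReal (rexp (n * g (magPP n x))) • Measure.dirac x

/-- The free energy functional of the mean-field model: entropy plus energy. -/
noncomputable def freeEnergy (g : ℝ → ℝ) (t : ℝ) : ℝ := binEnt t - g t

/-- The total Boltzmann weight of the configurations with `k` spins up. -/
noncomputable def levelWeight (g : ℝ → ℝ) (n k : ℕ) : ℝ :=
  n.choose k * rexp (n * g (gridMag n k))

open Classical in
/-- The total Boltzmann weight of the configurations with magnetization per particle in `B`. -/
noncomputable def magWeight (g : ℝ → ℝ) (n : ℕ) (B : Set ℝ) : ℝ :=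
  ∑ k ∈ Finset.range (n + 1) with gridMag n k ∈ B, levelWeight g n k

lemma magPP_eq_gridMag (y : Fin n → Bool) :
    magPP n y = gridMag n (Finset.univ.filter fun i => y i = true).card := by
  have hspin (b : Bool) : spin b = 2 * (if b = true then (1 : ℝ) else 0) - 1 := by
    cases b <;> norm_num [spin]
  simp only [magPP, totalMag, gridMag, hspin, Finset.sum_sub_distrib, ← Finset.mul_sum,
    Finset.sum_boole, Finset.sum_const, Finset.card_univ, Fintype.card_fin, nsmul_eq_mul, mul_one]

lemma sum_magPP_eq_sum_choose_mul (n : ℕ) (F : ℝ → ℝ) :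
    ∑ y : Fin n → Bool, F (magPP n y)
      = ∑ k ∈ Finset.range (n + 1), n.choose k * F (gridMag n k) := by
  have hcard := Finset.sum_powerset_apply_card (fun k => F (gridMag n k))
    (x := (Finset.univ : Finset (Fin n)))
  simp only [Finset.powerset_univ, Finset.card_univ, Fintype.card_fin, nsmul_eq_mul] at hcard
  rw [← hcard]
  refine Finset.sum_nbij' (fun y => Finset.univ.filter fun i => y i = true)
    (fun s i => decide (i ∈ s)) ?_ ?_ ?_ ?_ fun y _ => by rw [magPP_eq_gridMag]
  all_goals simp

open Classical in
lemma meanFieldMeasure_real_magPP_mem (n : ℕ) (g : ℝ → ℝ) (B : Set ℝ) :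
    (meanFieldMeasure n g).real {y | magPP n y ∈ B}
      = (∑ x : Fin n → Bool, ENNReal.ofReal (rexp (n * g (magPP n x)))).toReal⁻¹
        * magWeight g n B := by
  have hdirac (y : Fin n → Bool) :
      (ENNReal.ofReal (rexp (n * g (magPP n y))) • Measure.dirac y).real {y | magPP n y ∈ B}
        = if magPP n y ∈ B then rexp (n * g (magPP n y)) else 0 := by
    rw [measureReal_ennreal_smul_apply, ENNReal.toReal_ofReal (Real.exp_pos _).le]
    by_cases hy : magPP n y ∈ B <;> simp [measureReal_def, hy]
  have hsum : (∑ y : Fin n → Bool, ENNReal.ofReal (rexp (n * g (magPP n y))) •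
      Measure.dirac y).real {y | magPP n y ∈ B} = ∑ y : Fin n → Bool,
        (ENNReal.ofReal (rexp (n * g (magPP n y))) • Measure.dirac y).real {y | magPP n y ∈ B} := by
    simp only [measureReal_def, Measure.finsetSum_apply]
    exact ENNReal.toReal_sum fun y _ => ENNReal.mul_ne_top (by finiteness) (measure_ne_top _ _)
  rw [meanFieldMeasure, measureReal_ennreal_smul_apply, ENNReal.toReal_inv, hsum]
  congr 1
  simp only [hdirac, magWeight, Finset.sum_filter, levelWeight, ← mul_ite_zero]
  exact sum_magPP_eq_sum_choose_mul n fun t => if t ∈ B then rexp (n * g t) else 0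

lemma meanFieldMeasure_real_div (n : ℕ) (g : ℝ → ℝ) (A B : Set ℝ) :
    (meanFieldMeasure n g).real {y | magPP n y ∈ B} / (meanFieldMeasure n g).real
      {y | magPP n y ∈ A} = magWeight g n B / magWeight g n A := by
  have hpos : 0 < (∑ x : Fin n → Bool, ENNReal.ofReal (rexp (n * g (magPP n x)))).toReal := by
    rw [← ENNReal.ofReal_sum_of_nonneg fun x _ => (Real.exp_pos _).le, ENNReal.toReal_ofReal]
    all_goals positivity
  rw [meanFieldMeasure_real_magPP_mem, meanFieldMeasure_real_magPP_mem,
    mul_div_mul_left _ _ (inv_ne_zero hpos.ne')]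

lemma levelWeight_nonneg (g : ℝ → ℝ) (n k : ℕ) : 0 ≤ levelWeight g n k := by
  unfold levelWeight
  positivity

lemma magWeight_nonneg (g : ℝ → ℝ) (n : ℕ) (B : Set ℝ) : 0 ≤ magWeight g n B :=
  Finset.sum_nonneg fun k _ => levelWeight_nonneg g n k

open Classical in
lemma magWeight_mono (hBA : B ⊆ A) : magWeight g n B ≤ magWeight g n A :=
  Finset.sum_le_sum_of_subset_of_nonneg
    (Finset.monotone_filter_right _ fun _ _ hk => hBA hk) fun k _ _ => levelWeight_nonneg g n k

end MeanField

section LevelWeights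

variable {n k : ℕ} {g : ℝ → ℝ} {m : ℝ}

/-- The factor that makes `levelWeight` comparable to the unnormalized Gaussian density around
`m`: the reciprocal of Stirling's approximation to the Boltzmann weight at magnetization `m`. -/
noncomputable def gaussianNormalizer (g : ℝ → ℝ) (m : ℝ) (n : ℕ) : ℝ :=
  √(π * n * (1 - m ^ 2) / 2) * rexp (n * freeEnergy g m)

lemma gaussianNormalizer_nonneg (g : ℝ → ℝ) (m : ℝ) (n : ℕ) : 0 ≤ gaussianNormalizer g m n := by
  unfold gaussianNormalizer
  positivity

lemma gaussianNormalizer_mul_levelWeight (hm : m ∈ Set.Ioo (-1) 1) (hk : k ≠ 0) (hkn : k < n) :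
    gaussianNormalizer g m n * levelWeight g n k
      = rexp (log (stirlingRatio n k) + (log (1 - m ^ 2) - log (1 - gridMag n k ^ 2)) / 2
        - n * (freeEnergy g (gridMag n k) - freeEnergy g m)) := by
  have hn : n ≠ 0 := by lia
  have hm' : 0 < 1 - m ^ 2 := by nlinarith [hm.1, hm.2]
  have ht' : 0 < 1 - gridMag n k ^ 2 := by
    have hl : n - k ≠ 0 := by lia
    rw [one_sub_gridMag_sq hkn.le hn]
    positivity
  have hsqrt : √(π * n * (1 - m ^ 2) / 2) * √(2 / (π * n * (1 - gridMag n k ^ 2)))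
      = rexp ((log (1 - m ^ 2) - log (1 - gridMag n k ^ 2)) / 2) := by
    rw [Real.exp_half, Real.exp_sub, Real.exp_log hm', Real.exp_log ht',
      ← Real.sqrt_mul (by positivity)]
    congr 1
    field_simp
  have hexp : rexp (n * freeEnergy g m) * rexp (n * g (gridMag n k))
        / rexp (n * binEnt (gridMag n k))
      = rexp (-(n * (freeEnergy g (gridMag n k) - freeEnergy g m))) := by
    rw [← Real.exp_add, ← Real.exp_sub, freeEnergy, freeEnergy]
    ring_nf
  rw [sub_eq_add_neg, Real.exp_add, Real.exp_add, Real.exp_log (stirlingRatio_pos hk hkn),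
    ← hsqrt, ← hexp, gaussianNormalizer, levelWeight, choose_eq_stirlingRatio_mul hk hkn]
  ring

lemma gaussianNormalizer_mul_levelWeight_le (hkn : k ≤ n) (hn : n ≠ 0) :
    gaussianNormalizer g m n * levelWeight g n k
      ≤ 2 * n * rexp (-(n * (freeEnergy g (gridMag n k) - freeEnergy g m))) := by
  have hsqrt : √(π * n * (1 - m ^ 2) / 2) ≤ 2 * n := by
    have hn1 : (1 : ℝ) ≤ n := by exact_mod_cast Nat.one_le_iff_ne_zero.2 hn
    have hvar : π * n * (1 - m ^ 2) ≤ π * n :=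
      mul_le_of_le_one_right (by positivity) (by linarith [sq_nonneg m])
    rw [Real.sqrt_le_left (by positivity)]
    nlinarith [Real.pi_le_four]
  have hexp : rexp (n * freeEnergy g m) * rexp (n * g (gridMag n k))
      = rexp (n * binEnt (gridMag n k))
        * rexp (-(n * (freeEnergy g (gridMag n k) - freeEnergy g m))) := by
    rw [← Real.exp_add, ← Real.exp_add, freeEnergy, freeEnergy]
    ring_nf
  calc gaussianNormalizer g m n * levelWeight g n k
      = √(π * n * (1 - m ^ 2) / 2) * (n.choose k * rexp (n * binEnt (gridMag n k)))
        * rexp (-(n * (freeEnergy g (gridMag n k) - freeEnergy g m))) := by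
        rw [gaussianNormalizer, levelWeight]
        linear_combination (√(π * n * (1 - m ^ 2) / 2) * n.choose k) * hexp
    _ ≤ 2 * n * 1 * rexp (-(n * (freeEnergy g (gridMag n k) - freeEnergy g m))) := by
        gcongr
        exact choose_mul_exp_mul_binEnt_le_one hkn hn
    _ = _ := by rw [mul_one]

lemma gaussianNormalizer_mul_sum_levelWeight_le (hn : n ≠ 0) {η : ℝ} (hη : 0 < η)
    {T : Finset ℕ} (hTn : T ⊆ Finset.range (n + 1))
    (hT : ∀ k ∈ T, η ≤ freeEnergy g (gridMag n k) - freeEnergy g m) :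
    gaussianNormalizer g m n * ∑ k ∈ T, levelWeight g n k ≤ 8 / η ^ 2 := by
  have hn1 : (1 : ℝ) ≤ n := by exact_mod_cast Nat.one_le_iff_ne_zero.2 hn
  have hcard : (T.card : ℝ) ≤ 2 * n := by
    have := Finset.card_le_card hTn
    rw [Finset.card_range] at this
    have hcast : (T.card : ℝ) ≤ n + 1 := by exact_mod_cast this
    linarith
  have hdecay : (n : ℝ) ^ 2 * rexp (-(n * η)) ≤ 2 / η ^ 2 := by
    have hexp := Real.pow_div_factorial_le_exp (n * η) (by positivity) 2
    rw [Real.exp_neg, ← div_eq_mul_inv, div_le_div_iff₀ (Real.exp_pos _) (by positivity)]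
    norm_num at hexp
    linarith
  calc gaussianNormalizer g m n * ∑ k ∈ T, levelWeight g n k
      ≤ ∑ k ∈ T, 2 * n * rexp (-(n * η)) := by
        rw [Finset.mul_sum]
        refine Finset.sum_le_sum fun k hk =>
          (gaussianNormalizer_mul_levelWeight_le (by grind) hn).trans ?_
        gcongr
        exact hT k hk
    _ = T.card * (2 * n * rexp (-(n * η))) := by rw [Finset.sum_const, nsmul_eq_mul]
    _ ≤ 2 * n * (2 * n * rexp (-(n * η))) := by gcongr
    _ = 4 * (n ^ 2 * rexp (-(n * η))) := by ring
    _ ≤ 4 * (2 / η ^ 2) := by gcongr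
    _ = 8 / η ^ 2 := by ring

end LevelWeights

section LocalLimit

open Topology

variable {n k : ℕ} {g : ℝ → ℝ} {m lam : ℝ}

/-- The magnetization per particle `t`, centred at `m` and rescaled to unit variance when the
free energy has second derivative `lam` at `m`. -/
noncomputable def fluctuation (m lam : ℝ) (n : ℕ) (t : ℝ) : ℝ := √(n * lam) * (t - m)

/-- The spacing between the values of `fluctuation` at consecutive levels. -/
noncomputable def meshWidth (lam : ℝ) (n : ℕ) : ℝ := 2 * √lam / √n

lemma fluctuation_gridMag (hn : n ≠ 0) :
    fluctuation m lam n (gridMag n k) = fluctuation m lam n (-1) + k * meshWidth lam n := by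
  have hsq : √(n : ℝ) ^ 2 = n := Real.sq_sqrt n.cast_nonneg
  rw [fluctuation, fluctuation, gridMag, meshWidth, Real.sqrt_mul n.cast_nonneg]
  field_simp
  linear_combination (2 * (k : ℝ) * √lam) * hsq

lemma totalMag_sub_div_sqrt (hn : n ≠ 0) (hlam : 0 < lam) (y : Fin n → Bool) :
    (totalMag n y - n * m) / √(n / lam) = fluctuation m lam n (magPP n y) := by
  have hsq : √(n : ℝ) ^ 2 = n := Real.sq_sqrt n.cast_nonneg
  rw [fluctuation, magPP, Real.sqrt_mul n.cast_nonneg, Real.sqrt_div n.cast_nonneg]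
  field_simp
  rw [hsq, mul_comm]

lemma ne_zero_and_lt_of_gridMag_mem_Ioo (hn : n ≠ 0) (hk : gridMag n k ∈ Set.Ioo (-1) 1) :
    k ≠ 0 ∧ k < n := by
  have hfrac := half_one_add_gridMag (k := k) hn
  have hpos : 0 < (k : ℝ) / n := by linarith [hk.1]
  have hlt : (k : ℝ) / n < 1 := by linarith [hk.2]
  rw [div_lt_one (by positivity), Nat.cast_lt] at hlt
  exact ⟨by rintro rfl; simp at hpos, hlt⟩

lemma exists_abs_log_stirlingRatio_add_le (hm : m ∈ Set.Ioo (-1) 1) :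
    ∃ C, 0 < C ∧ ∀ᶠ t in 𝓝 m, ∀ n k : ℕ, n ≠ 0 → gridMag n k = t →
      |log (stirlingRatio n k) + (log (1 - m ^ 2) - log (1 - t ^ 2)) / 2|
        ≤ C * (|t - m| + 1 / n) := by
  have hvar : 0 < 1 - m ^ 2 := by nlinarith [hm.1, hm.2]
  have hlog : DifferentiableAt ℝ (fun t => log (1 - t ^ 2)) m :=
    DifferentiableAt.log (by fun_prop) hvar.ne'
  obtain ⟨C, hC, hprefactor⟩ := hlog.isBigO_sub.exists_pos
  have hinterior : ∀ᶠ t in 𝓝 m, (1 - m ^ 2) / 2 < 1 - t ^ 2 :=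
    (by fun_prop : ContinuousAt (fun t : ℝ => 1 - t ^ 2) m).eventually_const_lt (by linarith)
  refine ⟨C + 2 / (1 - m ^ 2), by positivity, ?_⟩
  filter_upwards [hprefactor.bound, hinterior, Ioo_mem_nhds hm.1 hm.2] with t hlogt ht htm
  rintro n k hn rfl
  obtain ⟨hk, hkn⟩ := ne_zero_and_lt_of_gridMag_mem_Ioo hn htm
  have hratio : |log (stirlingRatio n k)| ≤ 2 / (1 - m ^ 2) * (1 / n) := by
    calc |log (stirlingRatio n k)| ≤ 1 / (n * (1 - gridMag n k ^ 2)) :=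
          abs_log_stirlingRatio_le hk hkn
      _ ≤ 1 / (n * ((1 - m ^ 2) / 2)) := by gcongr
      _ = 2 / (1 - m ^ 2) * (1 / n) := by field_simp
  rw [norm_sub_rev, Real.norm_eq_abs, Real.norm_eq_abs] at hlogt
  set d := |gridMag n k - m|
  have hd : 0 ≤ d := abs_nonneg _
  calc _ ≤ |log (stirlingRatio n k)| + |log (1 - m ^ 2) - log (1 - gridMag n k ^ 2)| / 2 := by
        rw [← abs_two, ← abs_div, abs_two]
        exact abs_add_le _ _
    _ ≤ 2 / (1 - m ^ 2) * (d + 1 / n) + C * (d + 1 / n) :=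
        add_le_add (hratio.trans (by gcongr; linarith))
          ((half_le_self (abs_nonneg _)).trans (hlogt.trans (by gcongr; simp)))
    _ = (C + 2 / (1 - m ^ 2)) * (d + 1 / n) := by ring

lemma exists_gaussianNormalizer_mul_levelWeight_eq_exp (hm : m ∈ Set.Ioo (-1) 1)
    (hlam : 0 ≤ lam)
    (hF : (fun t => freeEnergy g t - freeEnergy g m - lam / 2 * (t - m) ^ 2)
      =O[𝓝 m] fun t => (t - m) ^ 3) :
    ∃ C, 0 < C ∧ ∀ᶠ t in 𝓝 m, ∀ n k : ℕ, n ≠ 0 → gridMag n k = t →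
      ∃ E, |E| ≤ C * (n * |t - m| ^ 3 + |t - m| + 1 / n) ∧
        gaussianNormalizer g m n * levelWeight g n k
          = rexp (-(1 / 2) * fluctuation m lam n t ^ 2 + E) := by
  obtain ⟨C₁, hC₁, hprefactor⟩ := exists_abs_log_stirlingRatio_add_le hm
  obtain ⟨C₂, hC₂, henergy⟩ := hF.exists_pos
  refine ⟨C₁ + C₂, by positivity, ?_⟩
  filter_upwards [hprefactor, henergy.bound, Ioo_mem_nhds hm.1 hm.2] with t hlogt ht htm
  rintro n k hn rfl
  obtain ⟨hk, hkn⟩ := ne_zero_and_lt_of_gridMag_mem_Ioo hn htm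
  specialize hlogt n k hn rfl
  rw [norm_pow, Real.norm_eq_abs, Real.norm_eq_abs] at ht
  refine ⟨log (stirlingRatio n k) + (log (1 - m ^ 2) - log (1 - gridMag n k ^ 2)) / 2
    - n * (freeEnergy g (gridMag n k) - freeEnergy g m - lam / 2 * (gridMag n k - m) ^ 2), ?_, ?_⟩
  · set d := |gridMag n k - m|
    have hd : 0 ≤ d := abs_nonneg _
    have hinv : 0 ≤ 1 / (n : ℝ) := by positivity
    have hcube : 0 ≤ n * d ^ 3 := by positivity
    refine (abs_sub _ _).trans ?_
    rw [abs_mul, Nat.abs_cast]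
    calc _ ≤ C₁ * (d + 1 / n) + n * (C₂ * d ^ 3) := by gcongr
      _ = C₁ * (d + 1 / n) + C₂ * (n * d ^ 3) := by ring
      _ ≤ C₁ * (n * d ^ 3 + d + 1 / n) + C₂ * (n * d ^ 3 + d + 1 / n) := by gcongr <;> linarith
      _ = (C₁ + C₂) * (n * d ^ 3 + d + 1 / n) := by ring
  · rw [gaussianNormalizer_mul_levelWeight hm hk hkn, fluctuation, mul_pow,
      Real.sq_sqrt (by positivity)]
    ring_nf

lemma abs_exp_add_sub_exp_le {b C D E u ε : ℝ} (hb : 0 < b) (hC : 0 ≤ C) (hε : 0 ≤ ε)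
    (hsmall : |E| ≤ C * ε * (u ^ 3 + u + 1)) (hdom : |E| ≤ b * u ^ 2 + D) :
    |rexp (-(4 * b * u ^ 2) + E) - rexp (-(4 * b * u ^ 2))|
      ≤ C * (4 / b ^ 2 * rexp b) * rexp D * ε * rexp (-(2 * b * u ^ 2)) := by
  calc |rexp (-(4 * b * u ^ 2) + E) - rexp (-(4 * b * u ^ 2))|
      = rexp (-(4 * b * u ^ 2)) * |rexp E - 1| := by
        rw [Real.exp_add, ← mul_sub_one, abs_mul, Real.abs_exp]
    _ ≤ rexp (-(4 * b * u ^ 2)) * (|E| * rexp |E|) := by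
        gcongr
        exact abs_exp_sub_one_le_abs_mul_exp_abs E
    _ ≤ rexp (-(4 * b * u ^ 2))
        * (C * ε * (4 / b ^ 2 * rexp b * rexp (b * u ^ 2)) * rexp (b * u ^ 2 + D)) := by
        gcongr
        exact hsmall.trans (by gcongr; exact cube_add_self_add_one_le_exp hb u)
    _ = C * (4 / b ^ 2 * rexp b) * rexp D * ε
        * (rexp (-(4 * b * u ^ 2)) * rexp (b * u ^ 2) * rexp (b * u ^ 2)) := by
        rw [Real.exp_add]
        ring
    _ = C * (4 / b ^ 2 * rexp b) * rexp D * ε * rexp (-(2 * b * u ^ 2)) := by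
        rw [← Real.exp_add, ← Real.exp_add]
        ring_nf

lemma mul_cube_add_self_add_inv_le {N : ℝ} (hN : 1 ≤ N) (d : ℝ) :
    N * d ^ 3 + d + 1 / N ≤ 1 / √N * ((√N * d) ^ 3 + √N * d + 1) := by
  have hinv : 1 / N ≤ 1 / √N := by
    gcongr
    exact Real.sqrt_le_iff.2 ⟨by positivity, by nlinarith⟩
  calc N * d ^ 3 + d + 1 / N ≤ N * d ^ 3 + d + 1 / √N := by gcongr
    _ = 1 / √N * ((√N * d) ^ 3 + √N * d + 1) := by
      rw [mul_pow, pow_succ √N, Real.sq_sqrt (by positivity)]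
      field_simp

lemma abs_exp_mul_sq_add_sub_exp_le {b C E N d : ℝ} (hb : 0 < b) (hC : 0 ≤ C) (hN : 1 ≤ N)
    (hd : d ≤ 1) (hCd : C * d ≤ b) (hE : |E| ≤ C * (N * d ^ 3 + d + 1 / N)) :
    |rexp (-(4 * b * (N * d ^ 2)) + E) - rexp (-(4 * b * (N * d ^ 2)))|
      ≤ C * (4 / b ^ 2 * rexp b) * rexp (2 * C) / √N * rexp (-(2 * b * (N * d ^ 2))) := by
  have hN0 : 0 ≤ N := by linarith
  have husq : N * d ^ 2 = (√N * d) ^ 2 := by rw [mul_pow, Real.sq_sqrt hN0]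
  have hsmall : |E| ≤ C * (1 / √N) * ((√N * d) ^ 3 + √N * d + 1) := by
    rw [mul_assoc]
    exact hE.trans (by gcongr; exact mul_cube_add_self_add_inv_le hN d)
  have hdom : |E| ≤ b * (√N * d) ^ 2 + 2 * C := by
    have hinv : 1 / N ≤ 1 := (div_le_one (by positivity)).2 hN
    calc |E| ≤ C * (N * d ^ 3 + d + 1 / N) := hE
      _ = C * d * (N * d ^ 2) + C * d + C * (1 / N) := by ring
      _ ≤ b * (N * d ^ 2) + C * 1 + C * 1 := by gcongr
      _ = b * (√N * d) ^ 2 + 2 * C := by rw [husq]; ring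
  rw [husq, div_eq_mul_one_div]
  exact abs_exp_add_sub_exp_le hb hC (by positivity) hsmall hdom

/-- The local central limit theorem, with an error that is summable over the levels. -/
lemma exists_abs_gaussianNormalizer_mul_levelWeight_sub_exp_le (hm : m ∈ Set.Ioo (-1) 1)
    (hlam : 0 < lam)
    (hF : (fun t => freeEnergy g t - freeEnergy g m - lam / 2 * (t - m) ^ 2)
      =O[𝓝 m] fun t => (t - m) ^ 3) :
    ∃ C, 0 < C ∧ ∀ᶠ t in 𝓝 m, ∀ n k : ℕ, n ≠ 0 → gridMag n k = t →
      |gaussianNormalizer g m n * levelWeight g n k - rexp (-(1 / 2) * fluctuation m lam n t ^ 2)|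
        ≤ C / √n * rexp (-(1 / 4) * fluctuation m lam n t ^ 2) := by
  obtain ⟨C, hC, hexponent⟩ := exists_gaussianNormalizer_mul_levelWeight_eq_exp hm hlam.le hF
  let b := lam / 8
  refine ⟨C * (4 / b ^ 2 * rexp b) * rexp (2 * C), by positivity, ?_⟩
  have hδ : 0 < min 1 (b / C) := by positivity
  filter_upwards [hexponent, Metric.ball_mem_nhds m hδ] with t ht hnear n k hn hkt
  obtain ⟨E, hE, hEeq⟩ := ht n k hn hkt
  obtain ⟨hd, hdC⟩ := lt_min_iff.1 (Metric.mem_ball.1 hnear)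
  have hfluct : fluctuation m lam n t ^ 2 = 8 * b * (n * |t - m| ^ 2) := by
    rw [fluctuation, mul_pow, Real.sq_sqrt (by positivity), sq_abs]
    ring
  have hhalf : -(1 / 2) * fluctuation m lam n t ^ 2 = -(4 * b * (n * |t - m| ^ 2)) := by
    rw [hfluct]
    ring
  have hquarter : -(1 / 4) * fluctuation m lam n t ^ 2 = -(2 * b * (n * |t - m| ^ 2)) := by
    rw [hfluct]
    ring
  rw [hEeq, hhalf, hquarter]
  exact abs_exp_mul_sq_add_sub_exp_le (by positivity) hC.le
    (by exact_mod_cast Nat.one_le_iff_ne_zero.2 hn) hd.le ((lt_div_iff₀' hC).1 hdC).le hE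

end LocalLimit

section FreeEnergy

open Set Topology

variable {g : ℝ → ℝ} {m : ℝ}

lemma taylor_isBigO_of_isLocalMin {f : ℝ → ℝ} {a : ℝ} (hf : ContDiffAt ℝ 3 f a)
    (hmin : IsLocalMin f a) :
    (fun t => f t - f a - iteratedDeriv 2 f a / 2 * (t - a) ^ 2) =O[𝓝 a] fun t => (t - a) ^ 3 := by
  refine (taylor_isBigO (n := 2) hf).congr_left fun t => ?_
  simp only [taylor_within_apply, Finset.sum_range_succ, Finset.sum_range_zero,
    iteratedDerivWithin_univ, iteratedDeriv_zero, iteratedDeriv_one, hmin.deriv_eq_zero]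
  simp only [Nat.factorial_zero, Nat.cast_one, inv_one, pow_zero, mul_one, smul_eq_mul, one_mul,
    zero_add, Nat.factorial_one, pow_one, mul_zero, add_zero, Nat.factorial_two, Nat.cast_ofNat]
  ring

lemma exists_add_le_of_isCompact_of_forall_lt {X : Type*} [TopologicalSpace X] {f : X → ℝ}
    {K U : Set X} {a : X} (hK : IsCompact K) (hf : ContinuousOn f K)
    (hmin : ∀ y ∈ K, y ≠ a → f a < f y) (hU : U ∈ 𝓝 a) :
    ∃ η, 0 < η ∧ ∀ y ∈ K, y ∉ U → f a + η ≤ f y := by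
  obtain ⟨c, hac, hc⟩ := (hK.diff isOpen_interior).exists_forall_le' (hf.mono sdiff_subset)
    fun y hy => hmin y hy.1 fun hya => hy.2 (hya ▸ mem_interior_iff_mem_nhds.2 hU)
  refine ⟨c - f a, sub_pos.2 hac, fun y hy hyU => ?_⟩
  rw [add_sub_cancel]
  exact hc y ⟨hy, fun hyi => hyU (interior_subset hyi)⟩

lemma continuous_binEnt : Continuous binEnt :=
  (Real.continuous_mul_log.comp (by fun_prop : Continuous fun t : ℝ => (1 - t) / 2)).add
    (Real.continuous_mul_log.comp (by fun_prop : Continuous fun t : ℝ => (1 + t) / 2))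

lemma contDiffAt_binEnt (hm : m ∈ Ioo (-1) 1) {r : WithTop ℕ∞} : ContDiffAt ℝ r binEnt m := by
  have hsub : (1 - m) / 2 ≠ 0 := by linarith [hm.2]
  have hadd : (1 + m) / 2 ≠ 0 := by linarith [hm.1]
  unfold binEnt
  fun_prop (disch := assumption)

lemma freeEnergy_sub_quadratic_isBigO (hm : m ∈ Ioo (-1) 1) (hg : ContDiffAt ℝ 3 g m)
    (hmin : IsLocalMin (freeEnergy g) m) :
    (fun t => freeEnergy g t - freeEnergy g m
        - iteratedDeriv 2 (freeEnergy g) m / 2 * (t - m) ^ 2) =O[𝓝 m] fun t => (t - m) ^ 3 :=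
  taylor_isBigO_of_isLocalMin ((contDiffAt_binEnt hm).sub hg) hmin

end FreeEnergy

section WeightedSums

open Set Topology

variable {g : ℝ → ℝ} {m lam : ℝ} {A B : Set ℝ}

lemma abs_mul_sum_sub_mul_sum_exp_neg_mul_sq_le {b b' ε a h : ℝ} (hb' : 0 < b') (hε : 0 ≤ ε)
    (hh : 0 ≤ h) {w : ℕ → ℝ} {T : Finset ℕ}
    (hw : ∀ k ∈ T, |w k - rexp (-b * (a + k * h) ^ 2)| ≤ ε * rexp (-b' * (a + k * h) ^ 2)) :
    |h * ∑ k ∈ T, w k - h * ∑ k ∈ T, rexp (-b * (a + k * h) ^ 2)| ≤ ε * (√(π / b') + 2 * h) := by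
  calc |h * ∑ k ∈ T, w k - h * ∑ k ∈ T, rexp (-b * (a + k * h) ^ 2)|
      = h * |∑ k ∈ T, (w k - rexp (-b * (a + k * h) ^ 2))| := by
        rw [Finset.sum_sub_distrib, ← mul_sub, abs_mul, abs_of_nonneg hh]
    _ ≤ h * ∑ k ∈ T, ε * rexp (-b' * (a + k * h) ^ 2) := by
        gcongr
        exact (Finset.abs_sum_le_sum_abs _ _).trans (Finset.sum_le_sum hw)
    _ = ε * (h * ∑ k ∈ T, rexp (-b' * (a + k * h) ^ 2)) := by rw [← Finset.mul_sum]; ring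
    _ ≤ ε * (√(π / b') + 2 * h) := by
        gcongr
        exact mul_sum_exp_neg_mul_sq_le hb' a hh T

lemma abs_fluctuation_lt_iff {n : ℕ} (hn : n ≠ 0) (hlam : 0 < lam) {δ t : ℝ} :
    |fluctuation m lam n t| < √(n * lam) * δ ↔ t ∈ Metric.ball m δ := by
  rw [fluctuation, abs_mul, abs_of_nonneg (Real.sqrt_nonneg _), Metric.mem_ball, Real.dist_eq]
  exact mul_lt_mul_iff_right₀ (by positivity)

lemma two_mul_meshWidth_le {n : ℕ} {δ : ℝ} (hn : n ≠ 0) (hnδ : 4 ≤ n * δ) :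
    2 * meshWidth lam n ≤ √(n * lam) * δ := by
  have hsq : √(n : ℝ) ^ 2 = n := Real.sq_sqrt n.cast_nonneg
  rw [meshWidth, Real.sqrt_mul n.cast_nonneg, ← mul_div_assoc, div_le_iff₀ (by positivity)]
  have hscaled := mul_le_mul_of_nonneg_right hnδ (Real.sqrt_nonneg lam)
  linear_combination hscaled - √lam * δ * hsq

lemma abs_meshWidth_mul_sum_sub_setIntegral_le {n : ℕ} {δ ε : ℝ} (hn : n ≠ 0) (hlam : 0 < lam)
    (hδl : δ ≤ 1 + m) (hδr : δ ≤ 1 - m) (hnδ : 4 ≤ n * δ) (hε : 0 ≤ ε) (hB : IsLowerSet B)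
    {w : ℕ → ℝ} {T : Finset ℕ}
    (hT : ∀ k, k ∈ T ↔
      k ≤ n ∧ fluctuation m lam n (gridMag n k) ∈ B ∧ gridMag n k ∈ Metric.ball m δ)
    (hw : ∀ k ∈ T, |w k - rexp (-(1 / 2) * fluctuation m lam n (gridMag n k) ^ 2)|
      ≤ ε * rexp (-(1 / 4) * fluctuation m lam n (gridMag n k) ^ 2)) :
    |meshWidth lam n * ∑ k ∈ T, w k - ∫ t in B, rexp (-(1 / 2) * t ^ 2)|
      ≤ ε * (√(π / (1 / 4)) + 2 * meshWidth lam n)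
        + (3 * meshWidth lam n + 4 / (√(n * lam) * δ)) := by
  set h := meshWidth lam n with hh
  have hh0 : 0 < h := by rw [hh, meshWidth]; positivity
  set R := √(n * lam) * δ with hRdef
  have hhR : 2 * h ≤ R := two_mul_meshWidth_le hn hnδ
  have hR : ∀ k, |fluctuation m lam n (gridMag n k)| < R ↔ gridMag n k ∈ Metric.ball m δ :=
    fun k => abs_fluctuation_lt_iff hn hlam
  have hleft : fluctuation m lam n (-1) ≤ -R := by
    rw [fluctuation, hRdef, ← mul_neg]
    gcongr
    linarith
  have hright : R ≤ fluctuation m lam n (-1) + n * h := by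
    have hone : gridMag n n = 1 := by rw [gridMag]; field_simp; ring
    rw [← fluctuation_gridMag hn, hone, fluctuation, hRdef]
    gcongr
  simp only [← hR, fluctuation_gridMag hn, ← hh] at hT hw
  have hriemann := abs_mul_sum_sub_setIntegral_lowerSet_exp_neg_mul_sq_le (by norm_num) hh0
    (by linarith) hleft hright hB hT (b := 1 / 2)
  have hperturb := abs_mul_sum_sub_mul_sum_exp_neg_mul_sq_le (by norm_num) hε hh0.le hw
  have hinv : 1 / (1 / 2 * (R - h)) ≤ 4 / R := by
    rw [div_le_div_iff₀ (by linarith) (by linarith)]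
    linarith
  exact (abs_sub_le _ _ _).trans (add_le_add hperturb (hriemann.trans (by linarith)))

lemma meshWidth_nonneg (lam : ℝ) (n : ℕ) : 0 ≤ meshWidth lam n := by
  unfold meshWidth
  positivity

lemma abs_magWeight_sub_setIntegral_le {n : ℕ} {C δ η : ℝ} (hn : n ≠ 0) (hlam : 0 < lam)
    (hδl : δ ≤ 1 + m) (hδr : δ ≤ 1 - m) (hnδ : 4 ≤ n * δ) (hC : 0 ≤ C) (hη : 0 < η)
    (hlocal : ∀ k, gridMag n k ∈ Metric.ball m δ →
      |gaussianNormalizer g m n * levelWeight g n k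
          - rexp (-(1 / 2) * fluctuation m lam n (gridMag n k) ^ 2)|
        ≤ C / √n * rexp (-(1 / 4) * fluctuation m lam n (gridMag n k) ^ 2))
    (hA : Metric.ball m δ ⊆ A)
    (hgap : ∀ t ∈ A ∩ Icc (-1) 1, t ∉ Metric.ball m δ → freeEnergy g m + η ≤ freeEnergy g t)
    (hB : IsLowerSet B) :
    |meshWidth lam n * (gaussianNormalizer g m n
          * magWeight g n (fluctuation m lam n ⁻¹' B ∩ A))
        - ∫ t in B, rexp (-(1 / 2) * t ^ 2)|
      ≤ C / √n * (√(π / (1 / 4)) + 2 * meshWidth lam n)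
        + (3 * meshWidth lam n + 4 / (√(n * lam) * δ)) + meshWidth lam n * (8 / η ^ 2) := by
  classical
  set S := (Finset.range (n + 1)).filter
    fun k => gridMag n k ∈ fluctuation m lam n ⁻¹' B ∩ A
  set T := S.filter fun k => gridMag n k ∈ Metric.ball m δ
  set T' := S.filter fun k => gridMag n k ∉ Metric.ball m δ
  have hnear := abs_meshWidth_mul_sum_sub_setIntegral_le (T := T)
    (w := fun k => gaussianNormalizer g m n * levelWeight g n k) hn hlam hδl hδr hnδ
    (by positivity) hB (by grind) fun k hk => hlocal k (Finset.mem_filter.1 hk).2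
  have hfar : gaussianNormalizer g m n * ∑ k ∈ T', levelWeight g n k ≤ 8 / η ^ 2 :=
    gaussianNormalizer_mul_sum_levelWeight_le hn hη (by grind) fun k hk => by
      have hkn : k ≤ n := by grind
      have := hgap _ ⟨by grind, gridMag_mem_Icc hkn hn⟩ (Finset.mem_filter.1 hk).2
      linarith
  have hfar0 : 0 ≤ gaussianNormalizer g m n * ∑ k ∈ T', levelWeight g n k :=
    mul_nonneg (gaussianNormalizer_nonneg g m n)
      (Finset.sum_nonneg fun k _ => levelWeight_nonneg g n k)
  have hsplit : gaussianNormalizer g m n * magWeight g n (fluctuation m lam n ⁻¹' B ∩ A)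
      = ∑ k ∈ T, gaussianNormalizer g m n * levelWeight g n k
        + gaussianNormalizer g m n * ∑ k ∈ T', levelWeight g n k := by
    rw [← Finset.mul_sum, ← mul_add, Finset.sum_filter_add_sum_filter_not, magWeight]
    congr!
  rw [hsplit, mul_add, add_sub_right_comm]
  refine (abs_add_le _ _).trans (add_le_add hnear ?_)
  rw [abs_of_nonneg (mul_nonneg (meshWidth_nonneg lam n) hfar0)]
  exact mul_le_mul_of_nonneg_left hfar (meshWidth_nonneg lam n)

lemma exists_abs_magWeight_sub_setIntegral_le (hm : m ∈ Ioo (-1) 1) (hlam : 0 < lam)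
    (hF : (fun t => freeEnergy g t - freeEnergy g m - lam / 2 * (t - m) ^ 2)
      =O[𝓝 m] fun t => (t - m) ^ 3)
    (hA : A ∈ 𝓝 m)
    (hgap : ∀ U ∈ 𝓝 m, ∃ η, 0 < η ∧
      ∀ t ∈ A ∩ Icc (-1) 1, t ∉ U → freeEnergy g m + η ≤ freeEnergy g t) :
    ∃ C, ∀ᶠ n : ℕ in atTop, ∀ B, IsLowerSet B →
      |meshWidth lam n * (gaussianNormalizer g m n
          * magWeight g n (fluctuation m lam n ⁻¹' B ∩ A))
        - ∫ t in B, rexp (-(1 / 2) * t ^ 2)| ≤ C / √n := by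
  obtain ⟨C, hC, hlocal⟩ := exists_abs_gaussianNormalizer_mul_levelWeight_sub_exp_le hm hlam hF
  obtain ⟨δ₀, hδ₀, hball₀⟩ := Metric.mem_nhds_iff.1 (inter_mem hlocal hA)
  obtain ⟨δ, hδ, hδlt⟩ := exists_between
    (lt_min hδ₀ (lt_min (neg_lt_iff_pos_add'.1 hm.1) (sub_pos.2 hm.2)))
  obtain ⟨hδδ₀, hδl, hδr⟩ := by simpa only [lt_min_iff] using hδlt
  have hball := (Metric.ball_subset_ball hδδ₀.le).trans hball₀
  obtain ⟨η, hη, hη_le⟩ := hgap _ (Metric.ball_mem_nhds m hδ)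
  refine ⟨C * (√(π / (1 / 4)) + 4 * √lam) + 6 * √lam + 4 / (√lam * δ) + 16 * √lam / η ^ 2, ?_⟩
  filter_upwards [eventually_ge_atTop ⌈4 / δ⌉₊, eventually_ne_atTop 0] with n hnδ hn B hB
  have hn1 : 1 ≤ √(n : ℝ) := Real.one_le_sqrt.2 (by exact_mod_cast Nat.one_le_iff_ne_zero.2 hn)
  have hmesh : meshWidth lam n ≤ 2 * √lam := div_le_self (by positivity) hn1
  refine (abs_magWeight_sub_setIntegral_le hn hlam hδl.le hδr.le
    ((div_le_iff₀ hδ).1 (Nat.ceil_le.1 hnδ)) hC.le hη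
    (fun k hk => (hball hk).1 n k hn rfl) (fun t ht => (hball ht).2) hη_le hB).trans ?_
  calc _ ≤ C / √n * (√(π / (1 / 4)) + 2 * (2 * √lam))
        + (3 * meshWidth lam n + 4 / (√(n * lam) * δ)) + meshWidth lam n * (8 / η ^ 2) := by
        gcongr
    _ = _ := by
        rw [meshWidth, Real.sqrt_mul n.cast_nonneg]
        field_simp
        ring

end WeightedSums

section Conclusion

open Set Topology

variable {g : ℝ → ℝ} {m lam : ℝ} {A : Set ℝ}

lemma stdNormalCDF_nonneg (x : ℝ) : 0 ≤ stdNormalCDF x := ENNReal.toReal_nonneg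

lemma stdNormalCDF_le_one (x : ℝ) : stdNormalCDF x ≤ 1 := measureReal_le_one

lemma stdNormalCDF_mul_sqrt_two_pi (x : ℝ) :
    stdNormalCDF x * √(2 * π) = ∫ t in Iic x, rexp (-(1 / 2) * t ^ 2) := by
  have hdensity (t : ℝ) : gaussianPDFReal 0 1 t = (√(2 * π))⁻¹ * rexp (-(1 / 2) * t ^ 2) := by
    rw [gaussianPDFReal]
    push_cast
    ring_nf
  rw [stdNormalCDF, gaussianReal_apply_eq_integral 0 one_ne_zero, ENNReal.toReal_ofReal
    (integral_nonneg fun t => gaussianPDFReal_nonneg 0 1 t)]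
  simp only [hdensity, integral_const_mul]
  field_simp

lemma abs_div_sub_le {N D I p ε : ℝ} (hI : 0 < I) (hεI : ε ≤ I / 2) (hp : p ∈ Icc 0 1)
    (hD : |D - I| ≤ ε) (hN : |N - p * I| ≤ ε) : |N / D - p| ≤ 4 * ε / I := by
  have hID : I / 2 ≤ D := by linarith [(abs_le.1 hD).1]
  have hD0 : 0 < D := by linarith
  have hnum : |N - p * I - p * (D - I)| ≤ 2 * ε := by
    refine (abs_sub _ _).trans ?_
    rw [abs_mul, abs_of_nonneg hp.1]
    linarith [mul_le_of_le_one_left (abs_nonneg (D - I)) hp.2]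
  calc |N / D - p| = |N - p * I - p * (D - I)| / D := by
        rw [← abs_of_pos hD0, ← abs_div, abs_of_pos hD0]
        congr 1
        field_simp
        ring
    _ ≤ 2 * ε / (I / 2) := div_le_div₀ ((abs_nonneg _).trans hnum) hnum (by positivity) hID
    _ = 4 * ε / I := by ring

lemma exists_forall_le_div_sqrt_of_eventually {α : Type*} {f : ℕ → α → ℝ} {C : ℝ}
    (hf : ∀ n a, f n a ≤ 1) (hC : ∀ᶠ n : ℕ in atTop, ∀ a, f n a ≤ C / √n) :
    ∃ C', ∀ n : ℕ, 1 ≤ n → ∀ a, f n a ≤ C' / √n := by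
  obtain ⟨N, hN⟩ := eventually_atTop.1 hC
  refine ⟨max C √N, fun n hn a => ?_⟩
  rcases le_total N n with hNn | hnN
  · exact (hN n hNn a).trans (by gcongr; exact le_max_left _ _)
  · refine (hf n a).trans ((one_le_div (by positivity)).2 ?_)
    exact (Real.sqrt_le_sqrt (by exact_mod_cast hnN)).trans (le_max_right _ _)

lemma magWeight_div_mem_Icc {B : Set ℝ} (n : ℕ) (hBA : B ⊆ A) :
    magWeight g n B / magWeight g n A ∈ Icc 0 1 :=
  ⟨div_nonneg (magWeight_nonneg g n B) (magWeight_nonneg g n A),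
    div_le_one_of_le₀ (magWeight_mono hBA) (magWeight_nonneg g n A)⟩

lemma exists_abs_magWeight_div_sub_stdNormalCDF_le (hm : m ∈ Ioo (-1) 1) (hlam : 0 < lam)
    (hF : (fun t => freeEnergy g t - freeEnergy g m - lam / 2 * (t - m) ^ 2)
      =O[𝓝 m] fun t => (t - m) ^ 3)
    (hA : A ∈ 𝓝 m)
    (hgap : ∀ U ∈ 𝓝 m, ∃ η, 0 < η ∧
      ∀ t ∈ A ∩ Icc (-1) 1, t ∉ U → freeEnergy g m + η ≤ freeEnergy g t) :
    ∃ C, ∀ n : ℕ, 1 ≤ n → ∀ x,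
      |magWeight g n (fluctuation m lam n ⁻¹' Iic x ∩ A) / magWeight g n A - stdNormalCDF x|
        ≤ C / √n := by
  obtain ⟨C, hC⟩ := exists_abs_magWeight_sub_setIntegral_le hm hlam hF hA hgap
  refine exists_forall_le_div_sqrt_of_eventually (C := 4 * C / √(2 * π)) (fun n x => ?_) ?_
  · have hratio := magWeight_div_mem_Icc (g := g) n
      (inter_subset_right : fluctuation m lam n ⁻¹' Iic x ∩ A ⊆ A)
    exact abs_sub_le_of_nonneg_of_le hratio.1 hratio.2 (stdNormalCDF_nonneg x)
      (stdNormalCDF_le_one x)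
  have hsmall : ∀ᶠ n : ℕ in atTop, C / √n ≤ √(2 * π) / 2 :=
    ((Real.tendsto_sqrt_atTop.comp tendsto_natCast_atTop_atTop).const_div_atTop
      C).eventually_le_const (by positivity)
  filter_upwards [hC, hsmall] with n hCn hsmall x
  have hdenom := hCn univ isLowerSet_univ
  have hnumer := hCn (Iic x) (isLowerSet_Iic x)
  rw [← stdNormalCDF_mul_sqrt_two_pi] at hnumer
  rw [preimage_univ, univ_inter, setIntegral_univ, integral_gaussian,
    show π / (1 / 2) = 2 * π by ring] at hdenom
  have hdiv := abs_div_sub_le (by positivity) hsmall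
    ⟨stdNormalCDF_nonneg x, stdNormalCDF_le_one x⟩ hdenom hnumer
  have hscale : meshWidth lam n * gaussianNormalizer g m n ≠ 0 := by
    refine left_ne_zero_of_mul (b := magWeight g n A) fun hzero => ?_
    rw [← mul_assoc, hzero, zero_sub, abs_neg, abs_of_pos (by positivity)] at hdenom
    linarith [(by positivity : 0 < √(2 * π))]
  rwa [← mul_assoc, ← mul_assoc, mul_div_mul_left _ _ hscale, ← mul_div_assoc,
    div_right_comm] at hdiv

end Conclusion

section Phases

open Set Topology

lemma exists_abs_meanFieldMeasure_div_sub_stdNormalCDF_le {g : ℝ → ℝ} {m : ℝ} {A : Set ℝ}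
    (hg : ContinuousOn g (Icc (-1) 1)) (hm : m ∈ Ioo (-1) 1) (hgm : ContDiffAt ℝ 3 g m)
    (hconv : 0 < iteratedDeriv 2 (freeEnergy g) m) (hA : A ∈ 𝓝 m)
    (hmin : ∀ y ∈ closure A ∩ Icc (-1) 1, y ≠ m → freeEnergy g m < freeEnergy g y) :
    ∃ C, ∀ n : ℕ, 1 ≤ n → ∀ x : ℝ,
      |(meanFieldMeasure n g).real
            ({y | (totalMag n y - n * m) / √(n / iteratedDeriv 2 (freeEnergy g) m) ≤ x}
              ∩ {y | magPP n y ∈ A}) /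
          (meanFieldMeasure n g).real {y | magPP n y ∈ A}
        - stdNormalCDF x| ≤ C / √n := by
  have hlocal : IsLocalMin (freeEnergy g) m := by
    filter_upwards [hA, Icc_mem_nhds hm.1 hm.2] with t htA ht
    rcases eq_or_ne t m with rfl | htm
    · exact le_rfl
    · exact (hmin t ⟨subset_closure htA, ht⟩ htm).le
  have hcont : ContinuousOn (freeEnergy g) (closure A ∩ Icc (-1) 1) :=
    continuous_binEnt.continuousOn.sub (hg.mono inter_subset_right)
  have hgap : ∀ U ∈ 𝓝 m, ∃ η, 0 < η ∧
      ∀ t ∈ A ∩ Icc (-1) 1, t ∉ U → freeEnergy g m + η ≤ freeEnergy g t := fun U hU =>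
    (exists_add_le_of_isCompact_of_forall_lt (isCompact_Icc.inter_left isClosed_closure) hcont
      hmin hU).imp fun η hη => ⟨hη.1, fun t ht => hη.2 t ⟨subset_closure ht.1, ht.2⟩⟩
  obtain ⟨C, hC⟩ := exists_abs_magWeight_div_sub_stdNormalCDF_le hm hconv
    (freeEnergy_sub_quadratic_isBigO hm hgm hlocal) hA hgap
  refine ⟨C, fun n hn x => ?_⟩
  have hratio := hC n hn x
  rw [← meanFieldMeasure_real_div] at hratio
  simp only [totalMag_sub_div_sqrt (Nat.one_le_iff_ne_zero.1 hn) hconv]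
  exact hratio

theorem stmt_10_general {ι : Type*} [Finite ι] {g : ℝ → ℝ} (hg : ContinuousOn g (Icc (-1) 1))
    {m : ι → ℝ} (hmem : ∀ i, m i ∈ Ioo (-1) 1) (hgm : ∀ i, ContDiffAt ℝ 3 g (m i))
    (hconv : ∀ i, 0 < iteratedDeriv 2 (freeEnergy g) (m i))
    {A : ι → Set ℝ} (hA : ∀ i, A i ∈ 𝓝 (m i))
    (hmin : ∀ i, ∀ y ∈ closure (A i) ∩ Icc (-1) 1, y ≠ m i →
      freeEnergy g (m i) < freeEnergy g y) :
    ∃ c : ℝ, 0 < c ∧ ∀ i, ∀ n : ℕ, 1 ≤ n → ∀ x : ℝ,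
      |(meanFieldMeasure n g).real
            ({y | (totalMag n y - n * m i) / √(n / iteratedDeriv 2 (freeEnergy g) (m i)) ≤ x}
              ∩ {y | magPP n y ∈ A i}) /
          (meanFieldMeasure n g).real {y | magPP n y ∈ A i}
        - stdNormalCDF x| ≤ c / √n := by
  choose C hC using fun i => exists_abs_meanFieldMeasure_div_sub_stdNormalCDF_le hg (hmem i)
    (hgm i) (hconv i) (hA i) (hmin i)
  obtain ⟨c, hc⟩ := Finite.exists_le C
  refine ⟨max c 1, by positivity, fun i n hn x => (hC i n hn x).trans ?_⟩
  gcongr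
  exact (hc i).trans (le_max_left c 1)

end Phases

section Cubic

open Set

variable {K J : ℝ}

/-- The negative energy per particle of the cubic Curie–Weiss model. -/
noncomputable def cubicInteraction (K J t : ℝ) : ℝ := K / 3 * t ^ 3 + J / 2 * t ^ 2

lemma contDiff_cubicInteraction {r : WithTop ℕ∞} : ContDiff ℝ r (cubicInteraction K J) := by
  unfold cubicInteraction
  fun_prop

lemma phiKJ_eq_freeEnergy : phiKJ K J = freeEnergy (cubicInteraction K J) :=
  funext fun _ => sub_sub _ _ _

lemma cubicProb_eq_meanFieldMeasure_real (n : ℕ) (s : Set (Fin n → Bool)) :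
    cubicProb n K J s = (meanFieldMeasure n (cubicInteraction K J)).real s :=
  rfl

lemma lt_of_mem_closure_of_forall_eq_or_eq {X : Type*} [TopologicalSpace X] {f : X → ℝ} {S : Set X}
    {m : Fin 2 → X} (hmem : ∀ i, m i ∈ S) (hmin : ∀ i, ∀ y ∈ S, f (m i) ≤ f y)
    (huniq : ∀ y ∈ S, f y = f (m 0) → y = m 0 ∨ y = m 1) {A : Fin 2 → Set X}
    (hAcl : ∀ i, m (1 - i) ∉ closure (A i)) :
    ∀ i, ∀ y ∈ closure (A i) ∩ S, y ≠ m i → f (m i) < f y := by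
  rintro i y ⟨hyA, hy⟩ hyi
  refine (hmin i y hy).lt_of_ne fun hval => ?_
  have hother : y ≠ m (1 - i) := fun h => hAcl i (h ▸ hyA)
  have hyval : f y = f (m 0) :=
    le_antisymm (hval.symm.trans_le (hmin i _ (hmem 0))) (hmin 0 y hy)
  fin_cases i
  · exact (huniq y hy hyval).elim hyi hother
  · exact (huniq y hy hyval).elim hother hyi

end Cubic

/-- Local (conditional) Berry–Esseen bounds on the coexistence curve: when `φ_{K,J}`
has exactly two minimizers `m 0 ≠ m 1` in `(−1,1)`, both nondegenerate, and `A i` is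
an open neighborhood of `m i` in `(−1,1)` whose closure misses the other phase, then
conditionally on `m_n ∈ A i`, the rescaled magnetization around `m i` satisfies a
Berry–Esseen bound of order `1/√n`. -/
theorem stmt_10 (K J : ℝ) (hK : 0 < K) (m : Fin 2 → ℝ)
    (hne : m 0 ≠ m 1)
    (hmem : ∀ i, m i ∈ Set.Ioo (-1 : ℝ) 1)
    (hmin : ∀ i, ∀ y ∈ Set.Icc (-1 : ℝ) 1, phiKJ K J (m i) ≤ phiKJ K J y)
    (huniq : ∀ y ∈ Set.Icc (-1 : ℝ) 1,
      phiKJ K J y = phiKJ K J (m 0) → (y = m 0 ∨ y = m 1))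
    (hconv : ∀ i, 0 < iteratedDeriv 2 (phiKJ K J) (m i))
    (A : Fin 2 → Set ℝ)
    (hAopen : ∀ i, IsOpen (A i)) (hAmem : ∀ i, m i ∈ A i)
    (hAsub : ∀ i, A i ⊆ Set.Ioo (-1 : ℝ) 1)
    (hAcl : ∀ i, m (1 - i) ∉ closure (A i)) :
    ∃ c : ℝ, 0 < c ∧ ∀ i : Fin 2, ∀ n : ℕ, 1 ≤ n → ∀ x : ℝ,
      |cubicProb n K J
            ({y | (totalMag n y - n * m i) /
                Real.sqrt (n / iteratedDeriv 2 (phiKJ K J) (m i)) ≤ x}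
              ∩ {y | magPP n y ∈ A i}) /
          cubicProb n K J {y | magPP n y ∈ A i}
        - stdNormalCDF x| ≤ c / Real.sqrt n := by
  simp only [cubicProb_eq_meanFieldMeasure_real, phiKJ_eq_freeEnergy] at *
  exact stmt_10_general (contDiff_cubicInteraction (r := 3)).continuous.continuousOn hmem
    (fun _ => contDiff_cubicInteraction.contDiffAt) hconv
    (fun i => (hAopen i).mem_nhds (hAmem i))
    (lt_of_mem_closure_of_forall_eq_or_eq (fun i => Set.Ioo_subset_Icc_self (hmem i)) hmin huniq
      hAcl)
end

section
/- For all J > 0, K ≥ 0, n ≥ 1 and t ≥ 0, the magnetization per particle m_n under the cubic Curie–Weiss measure satisfies the concentration inequality P_{n,K,J}( |m_n(X) − tanh( J·m_n(X) + K·m_n(X)² )| ≥ (J + 4K)/n + t/√n ) ≤ 2·exp( −t²/(4·(1 + J + 2K)) ). -/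
open MeasureTheory ProbabilityTheory Real Filter

/-!
This is Chatterjee's method of exchangeable pairs. Suppose `κ` is reversible for `μ` and an
antisymmetric `F` satisfies `∫ F (x, y) κ(x, dy) = f x`. Exchanging `x` and `y` turns the derivative
`∫ f e^{t f} dμ` of the moment generating function of `f` into
`½ ∫∫ F (x, y) (e^{t f x} - e^{t f y}) κ(x, dy) μ(dx)`. Since
`|e^a - e^b| ≤ ½ |a - b| (e^a + e^b)`, a bound `2 C` on `∫ |F (x, y) (f x - f y)| κ(x, dy)` makes
the logarithmic derivative at most `C |t|`, so that `f` is sub-Gaussian with variance proxy `C`.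

For the Curie–Weiss measure, take for `κ` the dynamics that resamples each spin from its conditional
law given the others, whose mean is `tanh h_i` for a local field `h_i`, and for `F` the difference
of the magnetizations. Then `f = (1/n) ∑ i, (x_i - tanh h_i)`. Reversing one spin changes the
magnetization by `2/n` and `f` by at most `2 (1 + |J| + 2 |K|) / n`, so that the variance proxy is
`2 (1 + |J| + 2 |K|) / n`; and `f` differs from `m - tanh (J m + K m²)` by at most
`(|J| + 4 |K|) / n`.
-/

open scoped NNReal ENNReal

lemma hasDerivAt_tanh (x : ℝ) : HasDerivAt tanh (1 / cosh x ^ 2) x := by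
  have h := (hasDerivAt_sinh x).div (hasDerivAt_cosh x) (cosh_pos x).ne'
  rw [← sq, ← sq, cosh_sq_sub_sinh_sq] at h
  exact h.congr_of_eventuallyEq (.of_forall tanh_eq_sinh_div_cosh)

lemma lipschitzWith_tanh : LipschitzWith 1 tanh := by
  refine lipschitzWith_of_nnnorm_deriv_le (fun x => (hasDerivAt_tanh x).differentiableAt)
    fun x => ?_
  rw [(hasDerivAt_tanh x).deriv, ← NNReal.coe_le_coe, coe_nnnorm, norm_of_nonneg (by positivity)]
  exact div_le_one_of_le₀ (one_le_pow₀ (one_le_cosh x)) (by positivity)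

lemma abs_tanh_sub_tanh_le (x y : ℝ) : |tanh x - tanh y| ≤ |x - y| := by
  simpa [dist_eq] using lipschitzWith_tanh.dist_le_mul x y

lemma exp_two_mul_mul_one_sub_tanh (x : ℝ) : exp (2 * x) * (1 - tanh x) = 1 + tanh x := by
  have hx : exp (-x) * exp x = 1 := by rw [← exp_add, neg_add_cancel, exp_zero]
  rw [tanh_eq, two_mul, exp_add]
  field_simp
  linear_combination 2 * exp x * hx

lemma exp_sub_exp_eq_tanh_mul (x y : ℝ) :
    exp x - exp y = tanh ((x - y) / 2) * (exp x + exp y) := by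
  have h := exp_two_mul_mul_one_sub_tanh ((x - y) / 2)
  rw [mul_div_cancel₀ _ two_ne_zero, exp_sub] at h
  field_simp at h
  linear_combination h

lemma abs_exp_sub_exp_le (x y : ℝ) : |exp x - exp y| ≤ |x - y| / 2 * (exp x + exp y) := by
  have h := abs_tanh_sub_tanh_le ((x - y) / 2) 0
  rw [tanh_zero, sub_zero, sub_zero, abs_div, abs_two] at h
  rw [exp_sub_exp_eq_tanh_mul, abs_mul, abs_of_pos (a := exp x + exp y) (by positivity)]
  gcongr

lemma abs_exp_mul_sub_exp_mul_mul_le (t a b c : ℝ) :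
    |(exp (t * a) - exp (t * b)) * c|
      ≤ |t| / 2 * (exp (t * a) * |c * (a - b)| + exp (t * b) * |c * (a - b)|) := by
  have h := abs_exp_sub_exp_le (t * a) (t * b)
  rw [← mul_sub, abs_mul] at h
  calc |(exp (t * a) - exp (t * b)) * c|
      = |exp (t * a) - exp (t * b)| * |c| := abs_mul _ _
    _ ≤ |t| * |a - b| / 2 * (exp (t * a) + exp (t * b)) * |c| := by gcongr
    _ = |t| / 2 * (exp (t * a) * |c * (a - b)| + exp (t * b) * |c * (a - b)|) := by
      rw [abs_mul c]
      ring

lemma abs_le_exp_add_exp_neg (x : ℝ) : |x| ≤ exp x + exp (-x) := by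
  linarith [add_one_le_exp |x|, exp_abs_le x]

section Subgaussian

variable {Ω : Type*} {mΩ : MeasurableSpace Ω} {μ : Measure Ω} {X : Ω → ℝ} {c : ℝ≥0}

lemma hasSubgaussianMGF_of_abs_deriv_cgf_le [IsProbabilityMeasure μ]
    (h_int : ∀ t, Integrable (fun ω => exp (t * X ω)) μ)
    (h_deriv : ∀ t, |deriv (cgf X μ) t| ≤ c * |t|) : HasSubgaussianMGF X c μ where
  integrable_exp_mul := h_int
  mgf_le t := by
    have h_univ : interior (integrableExpSet X μ) = Set.univ := by
      simp [integrableExpSet, h_int]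
    have h_diff (s : ℝ) : DifferentiableAt ℝ (cgf X μ) s :=
      (analyticAt_cgf (h_univ ▸ Set.mem_univ s)).differentiableAt
    have h_gap (s : ℝ) : HasDerivAt (fun s => c * s ^ 2 / 2 - cgf X μ s)
        (c * s - deriv (cgf X μ) s) s := by
      refine (((hasDerivAt_pow 2 s).const_mul (c : ℝ)).div_const 2).sub (h_diff s).hasDerivAt
        |>.congr_deriv ?_
      push_cast
      ring
    have h_min : IsMinOn (fun s => c * s ^ 2 / 2 - cgf X μ s) Set.univ 0 := by
      refine isMinOn_univ_of_deriv (h_gap 0).continuousAt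
        (fun s _ => (h_gap s).differentiableAt.differentiableWithinAt)
        (fun s _ => (h_gap s).differentiableAt.differentiableWithinAt)
        (fun s hs => ?_) fun s hs => ?_
      · have := h_deriv s
        rw [abs_of_neg (Set.mem_Iio.1 hs)] at this
        rw [(h_gap s).deriv]
        linarith [neg_abs_le (deriv (cgf X μ) s)]
      · have := h_deriv s
        rw [abs_of_pos (Set.mem_Ioi.1 hs)] at this
        rw [(h_gap s).deriv]
        linarith [le_abs_self (deriv (cgf X μ) s)]
    rw [← exp_cgf (h_int t), exp_le_exp]
    simpa using h_min (Set.mem_univ t)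

lemma measureReal_le_abs_le [IsFiniteMeasure μ] (h : HasSubgaussianMGF X c μ) {ε : ℝ}
    (hε : 0 ≤ ε) : μ.real {ω | ε ≤ |X ω|} ≤ 2 * exp (-ε ^ 2 / (2 * c)) := by
  have h_union : {ω | ε ≤ |X ω|} = {ω | ε ≤ X ω} ∪ {ω | ε ≤ (-X) ω} := by
    ext ω
    simp [le_abs]
  rw [h_union, two_mul]
  exact (measureReal_union_le _ _).trans (add_le_add (h.measure_ge_le hε) (h.neg.measure_ge_le hε))

end Subgaussian

section Exchangeable

variable {α : Type*} {mα : MeasurableSpace α} {μ : Measure α} {κ : Kernel α α} {F : α × α → ℝ}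

lemma integrable_fst_mul_compProd [SFinite μ] [IsSFiniteKernel κ] {g : α → ℝ} {C : ℝ}
    (hg_meas : Measurable g) (hg : Integrable g μ) (hF : Integrable F (μ ⊗ₘ κ))
    (hC : ∀ᵐ x ∂μ, ∫ y, |F (x, y)| ∂κ x ≤ C) :
    Integrable (fun p => g p.1 * F p) (μ ⊗ₘ κ) := by
  have h_iff := Measure.integrable_compProd_iff hF.aestronglyMeasurable
  refine (Measure.integrable_compProd_iff <| (hg_meas.comp measurable_fst).aestronglyMeasurable.mul
    hF.aestronglyMeasurable).2 ⟨?_, ?_⟩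
  · filter_upwards [(h_iff.1 hF).1] with x hx using hx.const_mul (g x)
  · simp only [Pi.mul_apply, Function.comp_apply, norm_mul, integral_const_mul]
    refine hg.norm.mul_bdd (c := C) (h_iff.1 hF).2.aestronglyMeasurable ?_
    filter_upwards [hC] with x hx
    rwa [norm_of_nonneg (integral_nonneg fun _ => norm_nonneg _)]

lemma integral_fst_mul_compProd_le [SFinite μ] [IsSFiniteKernel κ] {g : α → ℝ} {C : ℝ}
    (hg : Integrable g μ) (hg_nonneg : 0 ≤ g)
    (hgF : Integrable (fun p => g p.1 * F p) (μ ⊗ₘ κ)) (hC : ∀ᵐ x ∂μ, ∫ y, F (x, y) ∂κ x ≤ C) :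
    ∫ p, g p.1 * F p ∂(μ ⊗ₘ κ) ≤ C * ∫ x, g x ∂μ := by
  rw [Measure.integral_compProd hgF, ← integral_const_mul]
  refine integral_mono_ae hgF.integral_compProd (hg.const_mul C) ?_
  filter_upwards [hC] with x hx
  rw [integral_const_mul, mul_comm C]
  exact mul_le_mul_of_nonneg_left hx (hg_nonneg x)

lemma integral_exp_mul_ae_eq {f : α → ℝ}
    (hf : ∀ᵐ x ∂μ, ∫ y, F (x, y) ∂κ x = f x) (t : ℝ) :
    (fun x => ∫ y, exp (t * f x) * F (x, y) ∂κ x) =ᵐ[μ] fun x => f x * exp (t * f x) := by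
  filter_upwards [hf] with x hx
  rw [integral_const_mul, hx, mul_comm]

variable [IsFiniteMeasure μ] [IsFiniteKernel κ]

lemma measurePreserving_swap_compProd (hκ : κ.IsReversible μ) :
    MeasurePreserving Prod.swap (μ ⊗ₘ κ) (μ ⊗ₘ κ) where
  measurable := measurable_swap
  map_eq := by
    refine Measure.ext_prod fun {s t} hs ht => ?_
    rw [Measure.map_apply measurable_swap (hs.prod ht), Set.preimage_swap_prod,
      Measure.compProd_apply_prod ht hs, Measure.compProd_apply_prod hs ht, hκ ht hs]

lemma integral_swap_compProd (hκ : κ.IsReversible μ) (G : α × α → ℝ) :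
    ∫ p, G p.swap ∂(μ ⊗ₘ κ) = ∫ p, G p ∂(μ ⊗ₘ κ) :=
  (measurePreserving_swap_compProd hκ).integral_comp
    MeasurableEquiv.prodComm.measurableEmbedding G

lemma integrable_swap_compProd (hκ : κ.IsReversible μ) {G : α × α → ℝ}
    (hG : Integrable G (μ ⊗ₘ κ)) : Integrable (fun p => G p.swap) (μ ⊗ₘ κ) :=
  (measurePreserving_swap_compProd hκ).integrable_comp_of_integrable hG

lemma integrable_snd_mul_of_antisymm (hκ : κ.IsReversible μ) (hF : ∀ p, F p.swap = -F p)
    {g : α → ℝ} (hg : Integrable (fun p => g p.1 * F p) (μ ⊗ₘ κ)) :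
    Integrable (fun p => g p.2 * F p) (μ ⊗ₘ κ) := by
  simpa [hF] using (integrable_swap_compProd hκ hg).neg

lemma two_mul_integral_fst_mul_of_antisymm (hκ : κ.IsReversible μ) (hF : ∀ p, F p.swap = -F p)
    {g : α → ℝ} (hg : Integrable (fun p => g p.1 * F p) (μ ⊗ₘ κ)) :
    2 * ∫ p, g p.1 * F p ∂(μ ⊗ₘ κ) = ∫ p, (g p.1 - g p.2) * F p ∂(μ ⊗ₘ κ) := by
  have h_swap := integral_swap_compProd hκ fun p => g p.1 * F p
  simp only [hF, Prod.fst_swap, mul_neg, integral_neg] at h_swap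
  simp only [sub_mul]
  rw [integral_sub hg (integrable_snd_mul_of_antisymm hκ hF hg)]
  linarith

variable {f : α → ℝ}

lemma integrable_exp_mul_of_integrable_mul_exp (hf : Measurable f) {t : ℝ}
    (h_int : Integrable (fun x => f x * exp (t * f x)) μ) :
    Integrable (fun x => exp (t * f x)) μ := by
  refine ((integrable_const (exp |t|)).add h_int.norm).mono'
    (by fun_prop) (.of_forall fun x => ?_)
  rw [norm_of_nonneg (exp_pos _).le, Pi.add_apply, norm_mul, norm_of_nonneg (exp_pos _).le,
    norm_eq_abs]
  rcases le_total |f x| 1 with hx | hx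
  · have : t * f x ≤ |t| := (le_abs_self _).trans <| by
      rw [abs_mul]
      exact mul_le_of_le_one_right (abs_nonneg t) hx
    have := exp_le_exp.2 this
    have : 0 ≤ |f x| * exp (t * f x) := by positivity
    linarith
  · have := le_mul_of_one_le_left (exp_pos (t * f x)).le hx
    have := exp_pos |t|
    linarith

lemma abs_integral_exp_fst_mul_le (hκ : κ.IsReversible μ) (hF : ∀ p, F p.swap = -F p)
    {C t : ℝ} (hFt : Integrable (fun p => exp (t * f p.1) * F p) (μ ⊗ₘ κ))
    (hGt : Integrable (fun p => exp (t * f p.1) * |F p * (f p.1 - f p.2)|) (μ ⊗ₘ κ))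
    (h_exp : Integrable (fun x => exp (t * f x)) μ)
    (hC : ∀ᵐ x ∂μ, ∫ y, |F (x, y) * (f x - f y)| ∂κ x ≤ 2 * C) :
    |∫ p, exp (t * f p.1) * F p ∂(μ ⊗ₘ κ)| ≤ C * |t| * mgf f μ t := by
  let G : α × α → ℝ := fun p => |F p * (f p.1 - f p.2)|
  have hG_swap (p : α × α) : G p.swap = G p := by
    simp only [G, hF, Prod.fst_swap, Prod.snd_swap, abs_mul, abs_neg, abs_sub_comm]
  have h_swap_int : Integrable (fun p => exp (t * f p.2) * G p) (μ ⊗ₘ κ) := by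
    simpa only [Prod.fst_swap, hG_swap]
      using integrable_swap_compProd (G := fun p => exp (t * f p.1) * G p) hκ hGt
  have h_swap : ∫ p, exp (t * f p.2) * G p ∂(μ ⊗ₘ κ) = ∫ p, exp (t * f p.1) * G p ∂(μ ⊗ₘ κ) := by
    simpa only [Prod.fst_swap, hG_swap]
      using integral_swap_compProd hκ fun p => exp (t * f p.1) * G p
  have h_dom : Integrable
      (fun p => |t| / 2 * (exp (t * f p.1) * G p + exp (t * f p.2) * G p)) (μ ⊗ₘ κ) :=
    (hGt.add h_swap_int).const_mul _
  have h_two : 2 * |∫ p, exp (t * f p.1) * F p ∂(μ ⊗ₘ κ)| ≤ 2 * (C * |t| * mgf f μ t) := calc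
    2 * |∫ p, exp (t * f p.1) * F p ∂(μ ⊗ₘ κ)|
      = |∫ p, (exp (t * f p.1) - exp (t * f p.2)) * F p ∂(μ ⊗ₘ κ)| := by
        rw [← two_mul_integral_fst_mul_of_antisymm (g := fun x => exp (t * f x)) hκ hF hFt,
          abs_mul, abs_two]
    _ ≤ ∫ p, |t| / 2 * (exp (t * f p.1) * G p + exp (t * f p.2) * G p) ∂(μ ⊗ₘ κ) := by
        rw [← norm_eq_abs]
        exact norm_integral_le_of_norm_le h_dom
          (.of_forall fun p => abs_exp_mul_sub_exp_mul_mul_le t (f p.1) (f p.2) (F p))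
    _ = |t| * ∫ p, exp (t * f p.1) * G p ∂(μ ⊗ₘ κ) := by
        rw [integral_const_mul, integral_add hGt h_swap_int, h_swap]
        ring
    _ ≤ |t| * (2 * C * mgf f μ t) := by
        gcongr
        exact integral_fst_mul_compProd_le (g := fun x => exp (t * f x)) h_exp
          (fun x => (exp_pos _).le) hGt hC
    _ = 2 * (C * |t| * mgf f μ t) := by ring
  linarith

lemma integrable_mul_sub_of_antisymm (hκ : κ.IsReversible μ) (hF : ∀ p, F p.swap = -F p)
    (hf : Measurable f) (h_int : ∀ t, Integrable (fun p => exp (t * f p.1) * F p) (μ ⊗ₘ κ)) :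
    Integrable (fun p => F p * (f p.1 - f p.2)) (μ ⊗ₘ κ) := by
  have hF_int : Integrable F (μ ⊗ₘ κ) := by simpa using h_int 0
  have h_fst : Integrable (fun p => f p.1 * F p) (μ ⊗ₘ κ) := by
    refine ((h_int 1).norm.add (h_int (-1)).norm).mono'
      ((hf.comp measurable_fst).aestronglyMeasurable.mul hF_int.aestronglyMeasurable)
      (.of_forall fun p => ?_)
    simpa [abs_mul, add_mul] using
      mul_le_mul_of_nonneg_right (abs_le_exp_add_exp_neg (f p.1)) (abs_nonneg (F p))
  refine (h_fst.sub (integrable_snd_mul_of_antisymm hκ hF h_fst)).congr (.of_forall fun p => ?_)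
  simp only [Pi.sub_apply]
  ring

theorem hasSubgaussianMGF_of_isReversible {μ : Measure α} [IsProbabilityMeasure μ]
    {C : ℝ≥0} (hκ : κ.IsReversible μ) (hF : ∀ p, F p.swap = -F p) (hf_meas : Measurable f)
    (hf : ∀ᵐ x ∂μ, ∫ y, F (x, y) ∂κ x = f x)
    (h_int : ∀ t, Integrable (fun p => exp (t * f p.1) * F p) (μ ⊗ₘ κ))
    (hC : ∀ᵐ x ∂μ, ∫ y, |F (x, y) * (f x - f y)| ∂κ x ≤ 2 * C) :
    HasSubgaussianMGF f C μ := by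
  have h_exp (t : ℝ) : Integrable (fun x => exp (t * f x)) μ :=
    integrable_exp_mul_of_integrable_mul_exp hf_meas
      ((h_int t).integral_compProd.congr (integral_exp_mul_ae_eq hf t))
  have hG := integrable_mul_sub_of_antisymm hκ hF hf_meas h_int
  refine hasSubgaussianMGF_of_abs_deriv_cgf_le h_exp fun t => ?_
  have hGt : Integrable (fun p => exp (t * f p.1) * |F p * (f p.1 - f p.2)|) (μ ⊗ₘ κ) :=
    integrable_fst_mul_compProd (g := fun x => exp (t * f x)) (by fun_prop) (h_exp t) hG.abs
      (by simpa only [abs_abs] using hC)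
  have h_deriv_mgf : ∫ x, f x * exp (t * f x) ∂μ = ∫ p, exp (t * f p.1) * F p ∂(μ ⊗ₘ κ) := by
    rw [Measure.integral_compProd (h_int t), integral_congr_ae (integral_exp_mul_ae_eq hf t)]
  rw [deriv_cgf (by simp [integrableExpSet, h_exp]), h_deriv_mgf, abs_div,
    abs_of_pos (mgf_pos (h_exp t)), div_le_iff₀ (mgf_pos (h_exp t))]
  exact abs_integral_exp_fst_mul_le hκ hF (h_int t) hGt (h_exp t) hC

end Exchangeable

section JumpKernel

variable {α ι : Type*} [MeasurableSpace α] [DiscreteMeasurableSpace α] [Fintype ι]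

/-- The transition rates of a jump process on a discrete space that moves from `x` to `φ i x` at
rate `q i x`. The rates need not sum to one, so this is not a Markov kernel in general. -/
noncomputable def jumpKernel (φ : ι → α → α) (q : ι → α → ℝ≥0) : Kernel α α where
  toFun x := ∑ i, q i x • Measure.dirac (φ i x)
  measurable' := .of_discrete

variable {φ : ι → α → α} {q : ι → α → ℝ≥0}

lemma jumpKernel_apply (x : α) : jumpKernel φ q x = ∑ i, q i x • Measure.dirac (φ i x) := rfl

instance isFiniteKernel_jumpKernel [Finite α] : IsFiniteKernel (jumpKernel φ q) := by
  cases nonempty_fintype α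
  have h_fin (x : α) : jumpKernel φ q x Set.univ < ∞ := by
    simp [jumpKernel_apply]
  exact ⟨⟨∑ x, jumpKernel φ q x Set.univ, ENNReal.sum_lt_top.2 fun x _ => h_fin x,
    fun x => Finset.single_le_sum (f := fun x => jumpKernel φ q x Set.univ)
      (fun _ _ => zero_le) (Finset.mem_univ x)⟩⟩

lemma integral_jumpKernel (x : α) (g : α → ℝ) :
    ∫ y, g y ∂jumpKernel φ q x = ∑ i, q i x * g (φ i x) := by
  rw [jumpKernel_apply, integral_finsetSum_measure fun i _ =>
    (integrable_dirac (by finiteness)).smul_measure_nnreal]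
  simp only [integral_smul_nnreal_measure, integral_dirac, NNReal.smul_def, smul_eq_mul]

lemma setLIntegral_jumpKernel (μ : Measure α) (s t : Set α) :
    ∫⁻ x in s, jumpKernel φ q x t ∂μ
      = ∑ i, μ.withDensity (fun x => q i x) (s ∩ φ i ⁻¹' t) := by
  simp only [jumpKernel_apply, Measure.finsetSum_apply, Measure.smul_apply]
  rw [lintegral_finsetSum _ fun i _ => .of_discrete]
  refine Finset.sum_congr rfl fun i _ => ?_
  rw [withDensity_apply _ .of_discrete, Set.inter_comm, ← setLIntegral_indicator .of_discrete]
  refine lintegral_congr fun x => ?_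
  by_cases hx : φ i x ∈ t <;> simp [hx, ENNReal.smul_def]

lemma isReversible_jumpKernel {μ : Measure α} (hφ : ∀ i, Function.Involutive (φ i))
    (hq : ∀ i, MeasurePreserving (φ i) (μ.withDensity fun x => q i x)
      (μ.withDensity fun x => q i x)) :
    (jumpKernel φ q).IsReversible μ := by
  intro s t _ _
  simp only [setLIntegral_jumpKernel]
  refine Finset.sum_congr rfl fun i _ => ?_
  rw [← (hq i).measure_preimage (MeasurableSet.of_discrete).nullMeasurableSet,
    Set.preimage_inter, ← Set.preimage_comp, (hφ i).comp_self, Set.preimage_id,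
    Set.inter_comm]

lemma measurePreserving_withDensity_of_detailed_balance [Countable α] {μ : Measure α}
    {φ : α → α} {q : α → ℝ≥0} (hφ : Function.Involutive φ)
    (hq : ∀ x, q (φ x) * μ {φ x} = q x * μ {x}) :
    MeasurePreserving φ (μ.withDensity fun x => q x) (μ.withDensity fun x => q x) where
  measurable := .of_discrete
  map_eq := by
    refine Measure.ext_of_singleton fun x => ?_
    have h_preimage : φ ⁻¹' {x} = {φ x} := by
      ext y
      exact hφ.eq_iff
    rw [Measure.map_apply .of_discrete .of_discrete, h_preimage]
    simpa [withDensity_apply, mul_comm] using hq x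

end JumpKernel

section CurieWeiss

variable {n : ℕ} {K J : ℝ} (i : Fin n) (x : Fin n → Bool)

lemma spin_eq_one_or_neg_one (b : Bool) : spin b = 1 ∨ spin b = -1 := by
  cases b <;> simp [spin]

lemma abs_spin (b : Bool) : |spin b| = 1 := by
  cases b <;> simp [spin]

lemma spin_not (b : Bool) : spin (!b) = -spin b := by
  cases b <;> simp [spin]

lemma abs_two_mul_spin_div (b : Bool) : |2 * spin b / n| = 2 / n := by
  rw [abs_div, abs_mul, abs_spin, abs_two, mul_one, Nat.abs_cast]

/-- The configuration obtained from `x` by reversing the spin at site `i`. -/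
def flipAt : Fin n → Bool :=
  Function.update x i (!x i)

lemma flipAt_same : flipAt i x i = !x i := by
  simp [flipAt]

lemma flipAt_of_ne {i j : Fin n} (h : j ≠ i) : flipAt i x j = x j := by
  simp [flipAt, h]

lemma flipAt_involutive : Function.Involutive (flipAt i) := fun x => by
  simp [flipAt]

/-- The contribution to the magnetization per particle of the spins other than the `i`-th. -/
noncomputable def restMag : ℝ := (∑ j ∈ Finset.univ.erase i, spin (x j)) / n

lemma magPP_eq_restMag_add : magPP n x = restMag i x + spin (x i) / n := by
  rw [magPP, totalMag, restMag, ← Finset.add_sum_erase _ _ (Finset.mem_univ i)]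
  ring

lemma restMag_flipAt_same : restMag i (flipAt i x) = restMag i x := by
  rw [restMag, restMag,
    Finset.sum_congr rfl fun j hj => by rw [flipAt_of_ne x (Finset.ne_of_mem_erase hj)]]

lemma magPP_sub_magPP_flipAt : magPP n x - magPP n (flipAt i x) = 2 * spin (x i) / n := by
  rw [magPP_eq_restMag_add i x, magPP_eq_restMag_add i (flipAt i x), restMag_flipAt_same,
    flipAt_same, spin_not]
  ring

lemma abs_restMag_sub_restMag_flipAt_le (j : Fin n) :
    |restMag j x - restMag j (flipAt i x)| ≤ 2 / n := by
  obtain rfl | h := eq_or_ne j i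
  · rw [restMag_flipAt_same, sub_self, abs_zero]
    positivity
  · have h_mag := magPP_sub_magPP_flipAt i x
    rw [magPP_eq_restMag_add j x, magPP_eq_restMag_add j (flipAt i x), flipAt_of_ne x h,
      add_sub_add_right_eq_sub] at h_mag
    rw [h_mag, abs_two_mul_spin_div]

lemma abs_sum_spin_div_le_one (s : Finset (Fin n)) : |(∑ j ∈ s, spin (x j)) / n| ≤ 1 := by
  rw [abs_div, Nat.abs_cast]
  refine div_le_one_of_le₀ ((Finset.abs_sum_le_sum_abs _ _).trans ?_) n.cast_nonneg
  simpa [abs_spin] using s.card_le_univ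

lemma abs_magPP_le_one : |magPP n x| ≤ 1 := abs_sum_spin_div_le_one x Finset.univ

lemma abs_restMag_le_one : |restMag i x| ≤ 1 := abs_sum_spin_div_le_one x (Finset.univ.erase i)

variable (K J) in
/-- The effective field on spin `i`: under `P_{n,K,J}`, the conditional mean of spin `i` given the
others is the hyperbolic tangent of this quantity. -/
noncomputable def localField : ℝ :=
  J * restMag i x + K * restMag i x ^ 2 + K / (3 * (n : ℝ) ^ 2)

lemma localField_flipAt_same : localField K J i (flipAt i x) = localField K J i x := by
  rw [localField, localField, restMag_flipAt_same]

lemma abs_meanField_sub_le {a b c : ℝ} (ha : |a| ≤ 1) (hb : |b| ≤ 1) (hab : |a - b| ≤ c) :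
    |(J * a + K * a ^ 2) - (J * b + K * b ^ 2)| ≤ (|J| + 2 * |K|) * c := by
  have h_add : |a + b| ≤ 2 := (abs_add_le a b).trans (by linarith)
  calc |(J * a + K * a ^ 2) - (J * b + K * b ^ 2)|
      = |J + K * (a + b)| * |a - b| := by
        rw [← abs_mul]
        ring_nf
    _ ≤ (|J| + |K| * |a + b|) * |a - b| := by
        gcongr
        exact (abs_add_le _ _).trans_eq (by rw [abs_mul])
    _ ≤ (|J| + |K| * 2) * c := by gcongr
    _ = (|J| + 2 * |K|) * c := by ring

lemma abs_tanh_localField_sub_flipAt_le (j : Fin n) :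
    |tanh (localField K J j x) - tanh (localField K J j (flipAt i x))|
      ≤ (|J| + 2 * |K|) * (2 / n) := by
  refine (abs_tanh_sub_tanh_le _ _).trans ?_
  rw [localField, localField, add_sub_add_right_eq_sub]
  exact abs_meanField_sub_le (abs_restMag_le_one j _) (abs_restMag_le_one j _)
    (abs_restMag_sub_restMag_flipAt_le i x j)

lemma abs_tanh_localField_sub_le :
    |tanh (localField K J i x) - tanh (J * magPP n x + K * magPP n x ^ 2)|
      ≤ (|J| + 4 * |K|) / n := by
  have hn : (1 : ℝ) ≤ n := by exact_mod_cast i.pos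
  have h_rest : |restMag i x - magPP n x| ≤ 1 / n := by
    rw [magPP_eq_restMag_add i x, sub_add_cancel_left, abs_neg, abs_div, abs_spin, Nat.abs_cast]
  have h_field := abs_meanField_sub_le (K := K) (J := J) (abs_restMag_le_one i x)
    (abs_magPP_le_one x) h_rest
  have h_corr : |K / (3 * (n : ℝ) ^ 2)| ≤ |K| / n := by
    rw [abs_div, abs_of_pos (a := 3 * (n : ℝ) ^ 2) (by positivity)]
    gcongr
    nlinarith
  calc |tanh (localField K J i x) - tanh (J * magPP n x + K * magPP n x ^ 2)|
      ≤ |localField K J i x - (J * magPP n x + K * magPP n x ^ 2)| := abs_tanh_sub_tanh_le _ _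
    _ ≤ (|J| + 2 * |K|) * (1 / n) + |K| / n := by
        rw [localField, add_sub_right_comm]
        exact (abs_add_le _ _).trans (add_le_add h_field h_corr)
    _ = (|J| + 3 * |K|) / n := by ring
    _ ≤ (|J| + 4 * |K|) / n := by
        gcongr
        norm_num

variable (K J) in
/-- The average over the sites of the spin minus its conditional mean given the other spins. -/
noncomputable def drift : ℝ := (∑ i, (spin (x i) - tanh (localField K J i x))) / n

lemma drift_eq_magPP_sub :
    drift K J x = magPP n x - (∑ i, tanh (localField K J i x)) / n := by
  rw [drift, Finset.sum_sub_distrib, sub_div, magPP, totalMag]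

lemma abs_sum_div_le {c : ℝ} (hc : 0 ≤ c) (g : Fin n → ℝ) (hg : ∀ i, |g i| ≤ c) :
    |(∑ i, g i) / n| ≤ c := by
  rw [abs_div, Nat.abs_cast]
  refine div_le_of_le_mul₀ n.cast_nonneg hc ((Finset.abs_sum_le_sum_abs _ _).trans ?_)
  simpa [mul_comm] using Finset.sum_le_sum (s := Finset.univ) fun i _ => hg i

lemma abs_drift_sub_drift_flipAt_le :
    |drift K J x - drift K J (flipAt i x)| ≤ 2 * (1 + |J| + 2 * |K|) / n := by
  have h_tanh : |(∑ j, (tanh (localField K J j x) - tanh (localField K J j (flipAt i x)))) / n|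
      ≤ (|J| + 2 * |K|) * (2 / n) :=
    abs_sum_div_le (by positivity) _ fun j => abs_tanh_localField_sub_flipAt_le i x j
  have h_sub : drift K J x - drift K J (flipAt i x) = 2 * spin (x i) / n
      - (∑ j, (tanh (localField K J j x) - tanh (localField K J j (flipAt i x)))) / n := by
    rw [drift_eq_magPP_sub, drift_eq_magPP_sub, ← magPP_sub_magPP_flipAt i x,
      Finset.sum_sub_distrib]
    ring
  calc |drift K J x - drift K J (flipAt i x)|
      ≤ 2 / n + (|J| + 2 * |K|) * (2 / n) := by
        rw [h_sub]
        exact (abs_sub _ _).trans (add_le_add (abs_two_mul_spin_div _).le h_tanh)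
    _ = 2 * (1 + |J| + 2 * |K|) / n := by ring

lemma abs_magPP_sub_tanh_le (hn : n ≠ 0) :
    |magPP n x - tanh (J * magPP n x + K * magPP n x ^ 2)|
      ≤ (|J| + 4 * |K|) / n + |drift K J x| := by
  have h_tanh : |(∑ i, (tanh (localField K J i x)
      - tanh (J * magPP n x + K * magPP n x ^ 2))) / n| ≤ (|J| + 4 * |K|) / n :=
    abs_sum_div_le (by positivity) _ fun i => abs_tanh_localField_sub_le i x
  have h_sum : magPP n x - tanh (J * magPP n x + K * magPP n x ^ 2)
      = (∑ i, (tanh (localField K J i x) - tanh (J * magPP n x + K * magPP n x ^ 2))) / n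
        + drift K J x := by
    have hn' : (n : ℝ) ≠ 0 := Nat.cast_ne_zero.2 hn
    rw [drift_eq_magPP_sub, Finset.sum_sub_distrib, sub_div, Finset.sum_const, Finset.card_univ,
      Fintype.card_fin, nsmul_eq_mul, mul_div_cancel_left₀ _ hn']
    ring
  rw [h_sum]
  exact (abs_add_le _ _).trans (by gcongr)

variable (K J) in
/-- The heat-bath rate of reversing spin `i`: the conditional probability, given the other spins,
that a resampled spin `i` differs from `x i`. -/
noncomputable def flipRate : ℝ≥0 :=
  Real.toNNReal ((1 - spin (x i) * tanh (localField K J i x)) / 2)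

lemma abs_spin_mul_tanh_le_one (b : Bool) (u : ℝ) : |spin b * tanh u| ≤ 1 := by
  rw [abs_mul, abs_spin, one_mul]
  exact (abs_tanh_lt_one u).le

lemma coe_flipRate :
    (flipRate K J i x : ℝ) = (1 - spin (x i) * tanh (localField K J i x)) / 2 :=
  coe_toNNReal _ <| by linarith [abs_le.1 (abs_spin_mul_tanh_le_one (x i) (localField K J i x))]

lemma flipRate_le_one : flipRate K J i x ≤ 1 := by
  rw [← NNReal.coe_le_coe, coe_flipRate, NNReal.coe_one]
  linarith [abs_le.1 (abs_spin_mul_tanh_le_one (x i) (localField K J i x))]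

lemma sum_flipRate_mul_eq_drift :
    ∑ i, flipRate K J i x * (magPP n x - magPP n (flipAt i x)) = drift K J x := by
  rw [drift, Finset.sum_div]
  refine Finset.sum_congr rfl fun i _ => ?_
  rw [coe_flipRate, magPP_sub_magPP_flipAt]
  obtain h | h := spin_eq_one_or_neg_one (x i) <;> rw [h] <;> ring

lemma cubicWeight_eq_exp_mul_cubicWeight_flipAt :
    cubicWeight n K J x
      = exp (2 * (spin (x i) * localField K J i x)) * cubicWeight n K J (flipAt i x) := by
  have hn : (n : ℝ) ≠ 0 := by exact_mod_cast i.pos.ne'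
  rw [cubicWeight, cubicWeight, ← exp_add, magPP_eq_restMag_add i x,
    magPP_eq_restMag_add i (flipAt i x), restMag_flipAt_same, flipAt_same, spin_not, localField]
  congr 1
  obtain h | h := spin_eq_one_or_neg_one (x i) <;> rw [h] <;> field_simp <;> ring

lemma flipRate_mul_cubicWeight_flipAt :
    flipRate K J i (flipAt i x) * cubicWeight n K J (flipAt i x)
      = flipRate K J i x * cubicWeight n K J x := by
  have h_tanh : spin (x i) * tanh (localField K J i x)
      = tanh (spin (x i) * localField K J i x) := by
    obtain h | h := spin_eq_one_or_neg_one (x i) <;> simp [h]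
  rw [coe_flipRate, coe_flipRate, localField_flipAt_same, flipAt_same, spin_not, neg_mul, h_tanh,
    cubicWeight_eq_exp_mul_cubicWeight_flipAt i x]
  linear_combination (-cubicWeight n K J (flipAt i x) / 2)
    * exp_two_mul_mul_one_sub_tanh (spin (x i) * localField K J i x)

lemma cubicWeight_pos : 0 < cubicWeight n K J x := exp_pos _

lemma cubicMeasure_singleton :
    cubicMeasure n K J {x}
      = (∑ y, ENNReal.ofReal (cubicWeight n K J y))⁻¹ * ENNReal.ofReal (cubicWeight n K J x) := by
  simp [cubicMeasure, Set.indicator_apply]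

instance isProbabilityMeasure_cubicMeasure : IsProbabilityMeasure (cubicMeasure n K J) where
  measure_univ := by
    simp only [cubicMeasure, Measure.smul_apply, Measure.finsetSum_apply, measure_univ, smul_eq_mul,
      mul_one]
    exact ENNReal.inv_mul_cancel
      (by simpa [Finset.sum_eq_zero_iff] using ⟨fun _ => true, cubicWeight_pos _⟩)
      (ENNReal.sum_ne_top.2 fun _ _ => ENNReal.ofReal_ne_top)

lemma flipRate_mul_cubicMeasure_flipAt :
    flipRate K J i (flipAt i x) * cubicMeasure n K J {flipAt i x}
      = flipRate K J i x * cubicMeasure n K J {x} := by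
  simp only [cubicMeasure_singleton, mul_left_comm _ (∑ _, _)⁻¹, ← ENNReal.ofReal_coe_nnreal]
  rw [← ENNReal.ofReal_mul NNReal.zero_le_coe, ← ENNReal.ofReal_mul NNReal.zero_le_coe,
    flipRate_mul_cubicWeight_flipAt]

/-- The single-spin heat-bath dynamics of the cubic Curie–Weiss model, in which every spin is
resampled at rate one. -/
noncomputable def heatBathKernel (n : ℕ) (K J : ℝ) : Kernel (Fin n → Bool) (Fin n → Bool) :=
  jumpKernel flipAt (flipRate K J)

instance isFiniteKernel_heatBathKernel : IsFiniteKernel (heatBathKernel n K J) :=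
  isFiniteKernel_jumpKernel

lemma isReversible_heatBathKernel : (heatBathKernel n K J).IsReversible (cubicMeasure n K J) :=
  isReversible_jumpKernel flipAt_involutive fun i =>
    measurePreserving_withDensity_of_detailed_balance (flipAt_involutive i)
      (flipRate_mul_cubicMeasure_flipAt i)

lemma integral_abs_heatBathKernel_le (hn : n ≠ 0) :
    ∫ y, |(magPP n x - magPP n y) * (drift K J x - drift K J y)| ∂heatBathKernel n K J x
      ≤ 2 * (2 * (1 + |J| + 2 * |K|) / n) := by
  have hn' : (n : ℝ) ≠ 0 := Nat.cast_ne_zero.2 hn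
  rw [heatBathKernel, integral_jumpKernel]
  calc ∑ i, flipRate K J i x
        * |(magPP n x - magPP n (flipAt i x)) * (drift K J x - drift K J (flipAt i x))|
      ≤ ∑ _i : Fin n, 1 * (2 / n * (2 * (1 + |J| + 2 * |K|) / n)) := by
        gcongr with i
        · exact flipRate_le_one i x
        · rw [abs_mul, magPP_sub_magPP_flipAt, abs_two_mul_spin_div]
          gcongr
          exact abs_drift_sub_drift_flipAt_le i x
    _ = 2 * (2 * (1 + |J| + 2 * |K|) / n) := by
        rw [Finset.sum_const, Finset.card_univ, Fintype.card_fin, nsmul_eq_mul]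
        field_simp

lemma hasSubgaussianMGF_drift (hn : n ≠ 0) :
    HasSubgaussianMGF (drift K J) (2 * (1 + ‖J‖₊ + 2 * ‖K‖₊) / n)
      (cubicMeasure n K J) := by
  refine hasSubgaussianMGF_of_isReversible (F := fun p => magPP n p.1 - magPP n p.2)
    isReversible_heatBathKernel (fun p => (neg_sub _ _).symm) .of_discrete
    (.of_forall fun x => ?_) (fun t => .of_finite) (.of_forall fun x => ?_)
  · rw [heatBathKernel, integral_jumpKernel, sum_flipRate_mul_eq_drift]
  · simpa using integral_abs_heatBathKernel_le x hn

end CurieWeiss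

theorem stmt_16_general (K J : ℝ) (n : ℕ) (hn : 1 ≤ n) (t : ℝ) (ht : 0 ≤ t) :
    cubicProb n K J
        {x | (|J| + 4 * |K|) / n + t / √n ≤
          |magPP n x - tanh (J * magPP n x + K * magPP n x ^ 2)|} ≤
      2 * exp (-t ^ 2 / (4 * (1 + |J| + 2 * |K|))) := by
  have hn₀ : n ≠ 0 := Nat.one_le_iff_ne_zero.1 hn
  have hn' : (n : ℝ) ≠ 0 := Nat.cast_ne_zero.2 hn₀
  calc (cubicMeasure n K J).real {x | (|J| + 4 * |K|) / n + t / √n ≤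
          |magPP n x - tanh (J * magPP n x + K * magPP n x ^ 2)|}
      ≤ (cubicMeasure n K J).real {x | t / √n ≤ |drift K J x|} :=
        measureReal_mono fun x hx => le_of_add_le_add_left (hx.trans (abs_magPP_sub_tanh_le x hn₀))
    _ ≤ 2 * exp (-(t / √n) ^ 2 / (2 * (2 * (1 + ‖J‖₊ + 2 * ‖K‖₊) / n : ℝ≥0))) :=
        measureReal_le_abs_le (hasSubgaussianMGF_drift hn₀) (by positivity)
    _ = 2 * exp (-t ^ 2 / (4 * (1 + |J| + 2 * |K|))) := by
        push_cast
        rw [norm_eq_abs, norm_eq_abs, div_pow, sq_sqrt n.cast_nonneg]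
        congr 2
        field_simp
        norm_num

/-- Concentration inequality for the magnetization per particle in the cubic
Curie–Weiss model: for all `J > 0`, `K ≥ 0`, `n ≥ 1` and `t ≥ 0`,
`P_{n,K,J}(|m_n − tanh(J m_n + K m_n²)| ≥ (J+4K)/n + t/√n)
  ≤ 2 exp(−t²/(4(1+J+2K)))`. -/
theorem stmt_16 (K J : ℝ) (hJ : 0 < J) (hK : 0 ≤ K) (n : ℕ) (hn : 1 ≤ n)
    (t : ℝ) (ht : 0 ≤ t) :
    cubicProb n K J
        {x | (J + 4 * K) / n + t / Real.sqrt n ≤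
          |magPP n x - Real.tanh (J * magPP n x + K * (magPP n x) ^ 2)|} ≤
      2 * Real.exp (-t ^ 2 / (4 * (1 + J + 2 * K))) := by
  simpa only [abs_of_pos hJ, abs_of_nonneg hK] using stmt_16_general K J n hn t ht
end
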